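/- arXiv:0909.5199 — 3 statements merged into one kernel-verified Lean document; each statement's English description precedes it below -/
import Mathlib

section
/- For all n ≥ 1 and k ≥ 1, the number of up-down permutations π of [n] with st(π) = k equals the number of cycle-up-down permutations of [n] all of whose cycles have odd length and which have exactly k cycles. -/
open Equiv Finset

/-- `π` is an up-down permutation of `[n]` in one-line notation (0-indexed):
`π 0 < π 1 > π 2 < π 3 > ⋯`. -/
def IsUpDownPerm {n : ℕ} (π : Equiv.Perm (Fin n)) : Prop :=
  ∀ i j : Fin n, (j : ℕ) = (i : ℕ) + 1 →
    (((i : ℕ) % 2 = 0 → π i < π j) ∧ ((i : ℕ) % 2 = 1 → π j < π i))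

/-- The Euler number `E n`: the number of up-down permutations of `[n]`. -/
noncomputable def eulerE (n : ℕ) : ℕ :=
  Nat.card {π : Equiv.Perm (Fin n) // IsUpDownPerm π}

/-- The length of the cycle of `π` containing `x` (fixed points give length `1`). -/
noncomputable def cycLen {n : ℕ} (π : Equiv.Perm (Fin n)) (x : Fin n) : ℕ :=
  Function.minimalPeriod (⇑π) x

/-- `x` is the smallest element of its cycle of `π`. -/
def IsOrbitMin {n : ℕ} (π : Equiv.Perm (Fin n)) (x : Fin n) : Prop :=
  ∀ k : ℕ, x ≤ (π ^ k) x

/-- The cyclic representation `x, π x, π² x, …` (of length `cycLen π x`) of the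
cycle of `π` containing `x` has the up-down pattern `x < π x > π² x < ⋯`. -/
def CycleUpDownAt {n : ℕ} (π : Equiv.Perm (Fin n)) (x : Fin n) : Prop :=
  ∀ i : ℕ, i + 1 < cycLen π x →
    ((i % 2 = 0 → (π ^ i) x < (π ^ (i + 1)) x) ∧
     (i % 2 = 1 → (π ^ (i + 1)) x < (π ^ i) x))

/-- `π` is cycle-up-down: every cycle, written in standard form
(starting at its smallest element), is up-down. -/
def IsCUD {n : ℕ} (π : Equiv.Perm (Fin n)) : Prop :=
  ∀ x : Fin n, IsOrbitMin π x → CycleUpDownAt π x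

/-- The number of cycles of `π` (fixed points included), counted via the
smallest elements of the cycles. -/
noncomputable def cycleCount {n : ℕ} (π : Equiv.Perm (Fin n)) : ℕ :=
  Nat.card {x : Fin n // IsOrbitMin π x}

/-- The number of cycles of `π` of even length. -/
noncomputable def evenCycleCount {n : ℕ} (π : Equiv.Perm (Fin n)) : ℕ :=
  Nat.card {x : Fin n // IsOrbitMin π x ∧ Even (cycLen π x)}

/-- The number of cycles of `π` of odd length. -/
noncomputable def oddCycleCount {n : ℕ} (π : Equiv.Perm (Fin n)) : ℕ :=
  Nat.card {x : Fin n // IsOrbitMin π x ∧ Odd (cycLen π x)}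

/-- The number of excedances of `π`. -/
noncomputable def excCount {n : ℕ} (π : Equiv.Perm (Fin n)) : ℕ :=
  Nat.card {i : Fin n // i < π i}

/-- The number of left-to-right minima of `π` (in one-line notation). -/
noncomputable def lrmCount {n : ℕ} (π : Equiv.Perm (Fin n)) : ℕ :=
  Nat.card {i : Fin n // ∀ j : Fin n, j < i → π i < π j}

/-- The number of extreme elements of `π`: entries in position `≥ 2`
(0-indexed: position `≥ 1`) that are left-to-right minima or maxima. -/
noncomputable def extrCount {n : ℕ} (π : Equiv.Perm (Fin n)) : ℕ :=
  Nat.card {i : Fin n // (i : ℕ) ≠ 0 ∧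
    ((∀ j : Fin n, j < i → π i < π j) ∨ (∀ j : Fin n, j < i → π j < π i))}

/-- Auxiliary (fuel-based) computation of the length of the `s`-driven
min/max subsequence of a list: at step `j` (0-indexed) pick the minimum of the
remaining list if `s j = true`, its maximum if `s j = false`, and continue with
the part of the list strictly to the right of the picked entry. -/
def msLenAux : ℕ → (ℕ → Bool) → List ℕ → ℕ
  | 0, _, _ => 0
  | _, _, [] => 0
  | fuel + 1, s, a :: t =>
      let l := a :: t
      let v := if s 0 then l.foldr min a else l.foldr max a
      1 + msLenAux fuel (fun i => s (i + 1)) ((l.dropWhile (· != v)).tail)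

/-- The length of the `s`-driven min/max subsequence of a list
(`s j = true` means minimum at step `j`, `s j = false` means maximum). -/
def msLen (s : ℕ → Bool) (l : List ℕ) : ℕ := msLenAux l.length s l

/-- The one-line notation of `π` as a list of natural numbers. -/
def oneLine {n : ℕ} (π : Equiv.Perm (Fin n)) : List ℕ :=
  List.ofFn fun i => ((π i : ℕ))

/-- The statistic `m_s(π)`: the length of the `s`-driven min/max subsequence
of the one-line notation of `π`. -/
def msStat {n : ℕ} (s : ℕ → Bool) (π : Equiv.Perm (Fin n)) : ℕ :=
  msLen s (oneLine π)

/-- `st π`: the length of the min-max sequence of `π` (alternately take the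
minimum, the maximum, the minimum, … of what remains to the right). -/
def stStat {n : ℕ} (π : Equiv.Perm (Fin n)) : ℕ :=
  msStat (fun i => i % 2 == 0) π

/-- `π` is a cyclic permutation: it consists of a single cycle. -/
def IsCyclicPerm {n : ℕ} (π : Equiv.Perm (Fin n)) : Prop :=
  ∀ x y : Fin n, π.SameCycle x y

/-- The number of up-down cycles of `π` having length `k`. -/
noncomputable def udLenCount {n : ℕ} (π : Equiv.Perm (Fin n)) (k : ℕ) : ℕ :=
  Nat.card {x : Fin n // IsOrbitMin π x ∧ cycLen π x = k ∧ CycleUpDownAt π x}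

/-- `ud π`: the number of up-down cycles of `π`. -/
noncomputable def udCount {n : ℕ} (π : Equiv.Perm (Fin n)) : ℕ :=
  Nat.card {x : Fin n // IsOrbitMin π x ∧ CycleUpDownAt π x}

/-- `r n`: the number of permutations of `[n]` having no up-down cycles. -/
noncomputable def noUDCyclesCount (n : ℕ) : ℕ :=
  Nat.card {π : Equiv.Perm (Fin n) // ∀ x : Fin n, IsOrbitMin π x → ¬ CycleUpDownAt π x}

/-!
Split an up-down word as `u 1 v` at its smallest letter. The step into `1` is a descent, so `u` is
an up-down word of even length, while `v` is a down-up word whose max-min sequence is the min-max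
sequence of `u 1 v` without its first entry. The word `v` is split at its largest letter in the
same way, and so on. In a cycle-up-down permutation with odd cycles, the cycle of `1` is `(1, w)`
with `w` a down-up word of even length, and what remains is a permutation of the same kind with
one cycle fewer. Up-down and down-up words on a given set of letters are equinumerous, so the two
counts satisfy the same recurrence in `n` and `k`.
-/

section Alternating

variable {α : Type*} {b : Bool} {m x y : α} {u v : List α}

/-- Strict comparison in the direction `b`: `x < y` for `true`, `x > y` for `false`. -/
def DirLT [LT α] (b : Bool) (x y : α) : Prop := if b then x < y else y < x

/-- Words whose consecutive entries alternately rise and fall, the first step going in the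
direction `b`. -/
def Alternating [LT α] : Bool → List α → Prop
  | _, [] => True
  | _, [_] => True
  | b, x :: y :: t => DirLT b x y ∧ Alternating (!b) (y :: t)

lemma dirLT_not_iff [LT α] : DirLT (!b) x y ↔ DirLT b y x := by
  cases b <;> simp [DirLT]

lemma DirLT.asymm [Preorder α] (h : DirLT b x y) : ¬ DirLT b y x := by
  cases b <;> simpa [DirLT] using lt_asymm (by simpa [DirLT] using h)

lemma alternating_cons_iff [LT α] (hv : ∀ x ∈ v, DirLT b m x) :
    Alternating b (m :: v) ↔ Alternating (!b) v := by
  cases v with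
  | nil => simp [Alternating]
  | cons y t => simp [Alternating, hv y]

/- The step into the extreme entry `m` has to go against `b`, so it has odd index: this is where
the parity of `u` comes from. -/
lemma alternating_append_cons_iff [Preorder α] (hv : ∀ x ∈ v, DirLT b m x) :
    ∀ {u : List α}, (∀ x ∈ u, DirLT b m x) →
      (Alternating b (u ++ m :: v) ↔ (Alternating b u ∧ Even u.length) ∧ Alternating (!b) v)
  | [], _ => by simp [Alternating, alternating_cons_iff hv]
  | [x], hu => by simp [Alternating, (hu x (by simp)).asymm]
  | [x, y], hu => by
    simp [Alternating, dirLT_not_iff, hu y (by simp), alternating_cons_iff hv]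
  | x :: y :: z :: t, hu => by
    have ih := alternating_append_cons_iff hv (u := z :: t) fun w hw => hu w (by simp_all)
    simp only [List.cons_append, Alternating, Bool.not_not, List.length_cons,
      Nat.even_add_one (n := t.length + 1 + 1), Nat.even_add_one (n := t.length + 1),
      not_not] at ih ⊢
    tauto

lemma alternating_iff_getElem [LT α] : ∀ {b : Bool} {l : List α}, Alternating b l ↔
    ∀ (i : ℕ) (hi : i + 1 < l.length),
      (i % 2 = 0 → DirLT b l[i] l[i + 1]) ∧ (i % 2 = 1 → DirLT (!b) l[i] l[i + 1])
  | b, [] => by simp [Alternating]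
  | b, [x] => by simp [Alternating]
  | b, x :: y :: t => by
    rw [Alternating, ← Nat.and_forall_add_one, alternating_iff_getElem (l := y :: t)]
    refine and_congr ?_ (forall_congr' fun i => ?_)
    · simp
    have h₀ : (i + 1) % 2 = 0 ↔ i % 2 = 1 := by lia
    have h₁ : (i + 1) % 2 = 1 ↔ i % 2 = 0 := by lia
    simp [h₀, h₁, and_comm]

end Alternating

section MinMax

lemma isLeast_foldr_min {α : Type*} [LinearOrder α] (a : α) (l : List α) :
    IsLeast (insert a {x | x ∈ l}) (l.foldr min a) := by
  induction l with
  | nil => simp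
  | cons y t ih =>
    have : insert a {x | x ∈ y :: t} = insert y (insert a {x | x ∈ t}) := by grind
    exact this ▸ ih.insert y

lemma isGreatest_foldr_max {α : Type*} [LinearOrder α] (a : α) (l : List α) :
    IsGreatest (insert a {x | x ∈ l}) (l.foldr max a) :=
  isLeast_foldr_min (α := αᵒᵈ) a l

lemma foldr_extremum_eq {α : Type*} [LinearOrder α] {b : Bool} {a m : α} {l : List α}
    (ha : a ∈ l) (hm : m ∈ l) (hl : ∀ x ∈ l, x = m ∨ DirLT b m x) :
    (if b then l.foldr min a else l.foldr max a) = m := by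
  have hset : insert a {x | x ∈ l} = {x | x ∈ l} := Set.insert_eq_of_mem ha
  cases b
  · refine (hset ▸ isGreatest_foldr_max a l).unique ⟨hm, fun x hx => ?_⟩
    exact (hl x hx).elim le_of_eq fun h => le_of_lt (by simpa [DirLT] using h)
  · refine (hset ▸ isLeast_foldr_min a l).unique ⟨hm, fun x hx => ?_⟩
    exact (hl x hx).elim ge_of_eq fun h => le_of_lt (by simpa [DirLT] using h)

lemma tail_dropWhile_append_cons {α : Type*} [DecidableEq α] {m : α} {u : List α} (v : List α)
    (hm : m ∉ u) : ((u ++ m :: v).dropWhile (· != m)).tail = v := by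
  rw [List.dropWhile_append_of_pos (by grind)]
  simp

lemma length_tail_dropWhile_cons_le {α : Type*} (a : α) (t : List α) (p : α → Bool) :
    ((a :: t).dropWhile p).tail.length ≤ t.length := by
  have := ((a :: t).dropWhile_suffix p).length_le
  grind

lemma msLenAux_eq_msLen : ∀ {fuel : ℕ} {s : ℕ → Bool} {l : List ℕ}, l.length ≤ fuel →
    msLenAux fuel s l = msLen s l
  | 0, _, [], _ => rfl
  | _ + 1, _, [], _ => rfl
  | fuel + 1, s, a :: t, h => by
    have hrest := length_tail_dropWhile_cons_le a t
    simp only [msLen, msLenAux, List.length_cons] at h ⊢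
    rw [msLenAux_eq_msLen ((hrest _).trans (by lia)), msLenAux_eq_msLen (hrest _)]
  termination_by _ _ l => l.length
  decreasing_by all_goals exact Nat.lt_succ_of_le (hrest _)

lemma msLen_eq_zero_iff {s : ℕ → Bool} {l : List ℕ} : msLen s l = 0 ↔ l = [] := by
  cases l <;> simp [msLen, msLenAux]

lemma msLen_append_cons {s : ℕ → Bool} {m : ℕ} {u v : List ℕ}
    (hu : ∀ x ∈ u, DirLT (s 0) m x) (hv : ∀ x ∈ v, DirLT (s 0) m x) :
    msLen s (u ++ m :: v) = msLen (fun i => s (i + 1)) v + 1 := by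
  obtain ⟨a, t, hat⟩ : ∃ a t, u ++ m :: v = a :: t := List.exists_cons_of_ne_nil (by simp)
  have hmu : m ∉ u := fun h => (hu m h).asymm (hu m h)
  have hextremum : (if s 0 then (a :: t).foldr min a else (a :: t).foldr max a) = m := by
    apply foldr_extremum_eq (by simp) <;> grind
  have hlen : v.length ≤ t.length := by
    have := congrArg List.length hat
    grind
  rw [hat, msLen, List.length_cons, msLenAux, hextremum, ← hat,
    tail_dropWhile_append_cons v hmu, msLenAux_eq_msLen hlen, add_comm]

/-- The selection rule of the alternating min/max subsequence that starts with a minimum if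
`b = true` and with a maximum if `b = false`. -/
def altRule (b : Bool) : ℕ → Bool := fun i => (i % 2 == 0) == b

lemma altRule_add_one (b : Bool) : (fun i => altRule b (i + 1)) = altRule (!b) := by
  funext i
  cases b <;> rcases Nat.mod_two_eq_zero_or_one i with h | h <;> simp [altRule, Nat.add_mod, h]

lemma msLen_altRule_append_cons {b : Bool} {m : ℕ} {u v : List ℕ}
    (hu : ∀ x ∈ u, DirLT b m x) (hv : ∀ x ∈ v, DirLT b m x) :
    msLen (altRule b) (u ++ m :: v) = msLen (altRule (!b)) v + 1 := by
  have h₀ : altRule b 0 = b := by simp [altRule]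
  rw [msLen_append_cons (by rwa [h₀]) (by rwa [h₀]), altRule_add_one]

end MinMax

section Words

variable {α : Type*} [LinearOrder α] {b : Bool} {S U : Finset α} {m : α} {l u v : List α}

/-- The alternating words in direction `b` that use every letter of `S` exactly once. -/
noncomputable def altWords (b : Bool) (S : Finset α) : Finset (List α) :=
  open Classical in {l ∈ S.val.lists.toFinset | Alternating b l}

/-- The words of `altWords b S` that have even length. -/
noncomputable def evenAltWords (b : Bool) (S : Finset α) : Finset (List α) :=
  {l ∈ altWords b S | Even l.length}

lemma mem_altWords : l ∈ altWords b S ↔ (l.Nodup ∧ l.toFinset = S) ∧ Alternating b l := by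
  have : S.val = ↑l ↔ l.Nodup ∧ l.toFinset = S := by
    constructor
    · intro h
      have hl : l.Nodup := by simpa [h] using S.nodup
      exact ⟨hl, Finset.val_injective (by rw [h, List.toFinset_val, hl.dedup])⟩
    · rintro ⟨hl, rfl⟩
      rw [List.toFinset_val, hl.dedup]
  simp [altWords, this]

lemma mem_evenAltWords : l ∈ evenAltWords b S ↔
    (l.Nodup ∧ l.toFinset = S) ∧ Alternating b l ∧ Even l.length := by
  rw [evenAltWords, mem_filter, mem_altWords, and_assoc]

lemma length_eq_card_of_mem_altWords (hl : l ∈ altWords b S) : l.length = #S := by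
  obtain ⟨⟨hnodup, rfl⟩, -⟩ := mem_altWords.1 hl
  exact (List.toFinset_card_of_nodup hnodup).symm

lemma altWords_empty : altWords b (∅ : Finset α) = {[]} := by
  ext l
  simp only [mem_altWords, List.toFinset_eq_empty_iff, mem_singleton]
  exact ⟨fun h => h.1.2, by rintro rfl; simp [Alternating]⟩

lemma card_evenAltWords :
    #(evenAltWords b S) = if Even #S then #(altWords b S) else 0 := by
  split_ifs with h
  · rw [evenAltWords, filter_true_of_mem fun l hl => by rwa [length_eq_card_of_mem_altWords hl]]
  · rw [evenAltWords, filter_false_of_mem fun l hl => by rwa [length_eq_card_of_mem_altWords hl],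
      card_empty]

lemma exists_mem_forall_erase_dirLT (b : Bool) (hS : S.Nonempty) :
    ∃ m ∈ S, ∀ x ∈ S.erase m, DirLT b m x := by
  cases b
  · exact ⟨S.max' hS, S.max'_mem hS, fun x hx => S.lt_max'_of_mem_erase_max' hS hx⟩
  · exact ⟨S.min' hS, S.min'_mem hS, fun x hx => S.min'_lt_of_mem_erase_min' hS hx⟩

lemma nodup_append_cons_and_toFinset_eq_iff (hm : m ∈ S) :
    (u ++ m :: v).Nodup ∧ (u ++ m :: v).toFinset = S ↔
      (u.toFinset ⊆ S.erase m ∧ u.Nodup) ∧ v.Nodup ∧ v.toFinset = S.erase m \ u.toFinset := by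
  simp only [List.nodup_append, List.nodup_cons, Finset.ext_iff, subset_iff, List.mem_toFinset,
    mem_sdiff, mem_erase]
  grind

lemma dirLT_of_toFinset_subset (hext : ∀ x ∈ S.erase m, DirLT b m x)
    (hu : u.toFinset ⊆ S.erase m) : ∀ x ∈ u, DirLT b m x :=
  fun x hx => hext x (hu (List.mem_toFinset.2 hx))

lemma append_cons_mem_altWords_iff (hm : m ∈ S) (hext : ∀ x ∈ S.erase m, DirLT b m x) :
    u ++ m :: v ∈ altWords b S ↔ u.toFinset ⊆ S.erase m ∧
      u ∈ evenAltWords b u.toFinset ∧ v ∈ altWords (!b) (S.erase m \ u.toFinset) := by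
  simp only [mem_altWords, mem_evenAltWords, nodup_append_cons_and_toFinset_eq_iff hm]
  have hsplit (hu : u.toFinset ⊆ S.erase m) (hv : v.toFinset = S.erase m \ u.toFinset) :
      Alternating b (u ++ m :: v) ↔ (Alternating b u ∧ Even u.length) ∧ Alternating (!b) v :=
    alternating_append_cons_iff (dirLT_of_toFinset_subset hext (hv.trans_subset sdiff_subset))
      (dirLT_of_toFinset_subset hext hu)
  tauto

/-- Triples `(U, u, z)` of a subset `U ⊆ R`, an alternating word `u` of even length on `U`, and a
structure `z ∈ X (R \ U)` on the remaining letters. -/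
noncomputable def evenSplits {β : Type*} (b : Bool) (R : Finset α) (X : Finset α → Finset β) :
    Finset ((_ : Finset α) × (List α × β)) :=
  R.powerset.sigma fun U => evenAltWords b U ×ˢ X (R \ U)

lemma mem_evenSplits {β : Type*} {R : Finset α} {X : Finset α → Finset β} {z : β} :
    (⟨U, u, z⟩ : (_ : Finset α) × (List α × β)) ∈ evenSplits b R X ↔
      U ⊆ R ∧ u ∈ evenAltWords b U ∧ z ∈ X (R \ U) := by
  simp [evenSplits]

lemma append_cons_mem_altWords_and_iff (hm : m ∈ S) (hext : ∀ x ∈ S.erase m, DirLT b m x)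
    {P P' : List α → Prop}
    (hP : (∀ x ∈ u, DirLT b m x) → (∀ x ∈ v, DirLT b m x) → (P (u ++ m :: v) ↔ P' v)) :
    u ++ m :: v ∈ altWords b S ∧ P (u ++ m :: v) ↔ u.toFinset ⊆ S.erase m ∧
      u ∈ evenAltWords b u.toFinset ∧ v ∈ altWords (!b) (S.erase m \ u.toFinset) ∧ P' v := by
  rw [append_cons_mem_altWords_iff hm hext, and_assoc, and_assoc]
  refine and_congr_right fun hu => and_congr_right fun _ => and_congr_right fun hv => ?_
  obtain ⟨⟨-, hv⟩, -⟩ := mem_altWords.1 hv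
  exact hP (dirLT_of_toFinset_subset hext hu)
    (dirLT_of_toFinset_subset hext (hv.trans_subset sdiff_subset))

open Classical in
lemma card_filter_altWords_eq_card_evenSplits (hm : m ∈ S)
    (hext : ∀ x ∈ S.erase m, DirLT b m x) {P P' : List α → Prop}
    (hP : ∀ {u v : List α}, (∀ x ∈ u, DirLT b m x) → (∀ x ∈ v, DirLT b m x) →
      (P (u ++ m :: v) ↔ P' v)) :
    #{l ∈ altWords b S | P l} =
      #(evenSplits b (S.erase m) fun T => {l ∈ altWords (!b) T | P' l}) := by
  have hmem {u v : List α} := append_cons_mem_altWords_and_iff (u := u) (v := v) hm hext hP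
  symm
  refine card_bij (fun p _ => p.2.1 ++ m :: p.2.2) ?_ ?_ ?_
  · rintro ⟨U, u, v⟩ h
    obtain ⟨hU, hu, hv⟩ := mem_evenSplits.1 h
    obtain ⟨⟨-, rfl⟩, -⟩ := mem_evenAltWords.1 hu
    exact mem_filter.2 (hmem.2 ⟨hU, hu, mem_filter.1 hv⟩)
  · rintro ⟨U, u, v⟩ h ⟨U', u', v'⟩ h' (heq : u ++ m :: v = u' ++ m :: v')
    obtain ⟨hU, hu, hv⟩ := mem_evenSplits.1 h
    obtain ⟨-, hu', -⟩ := mem_evenSplits.1 h'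
    obtain ⟨⟨-, rfl⟩, -⟩ := mem_evenAltWords.1 hu
    obtain ⟨⟨-, rfl⟩, -⟩ := mem_evenAltWords.1 hu'
    obtain ⟨⟨-, hv⟩, -⟩ := mem_altWords.1 (mem_filter.1 hv).1
    have hmu : m ∉ u := fun h => by simpa using hU (List.mem_toFinset.2 h)
    have hmv : m ∉ v := fun h => by simpa [hv] using List.mem_toFinset.2 h
    obtain ⟨rfl, -, rfl⟩ := (List.append_cons_inj_of_notMem hmu hmv).1 heq
    rfl
  · intro l hl
    obtain ⟨hl, hPl⟩ := mem_filter.1 hl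
    obtain ⟨⟨-, rfl⟩, -⟩ := mem_altWords.1 hl
    obtain ⟨u, v, rfl⟩ := List.append_of_mem (List.mem_toFinset.1 hm)
    obtain ⟨hU, hu, hv⟩ := hmem.1 ⟨hl, hPl⟩
    exact ⟨⟨u.toFinset, u, v⟩, mem_evenSplits.2 ⟨hU, hu, mem_filter.2 hv⟩, rfl⟩

end Words

section Recurrence

variable {α : Type*} [LinearOrder α] {b : Bool} {S : Finset α}

/-- The binomial convolution of two sequences, corresponding to the product of their exponential
generating functions. -/
def binomialConv (f g : ℕ → ℕ) (n : ℕ) : ℕ :=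
  ∑ j ∈ range (n + 1), n.choose j * (f j * g (n - j))

/-- The Euler zigzag numbers `1, 1, 1, 2, 5, 16, …`, defined by the recurrence that removes the
extreme letter of an alternating word. -/
def zigzag : ℕ → ℕ
  | 0 => 1
  | n + 1 => ∑ j : Fin (n + 1),
      n.choose j * ((if Even (j : ℕ) then zigzag j else 0) * zigzag (n - j))
decreasing_by all_goals lia

/-- The zigzag numbers of even index, and `0` at odd indices. -/
def evenZigzag (n : ℕ) : ℕ := if Even n then zigzag n else 0

/-- The common value of the two sides of the theorem: with `n` letters, the number of ways to
iterate `k` times the removal of an extreme letter together with an alternating word of even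
length, until no letter is left. -/
def zigzagStirling : ℕ → ℕ → ℕ
  | 0, n => if n = 0 then 1 else 0
  | _ + 1, 0 => 0
  | k + 1, n + 1 => binomialConv evenZigzag (zigzagStirling k) n

lemma zigzag_succ (n : ℕ) : zigzag (n + 1) = binomialConv evenZigzag zigzag n := by
  simp only [zigzag, binomialConv, evenZigzag, sum_range]

lemma card_evenSplits {β : Type*} {R : Finset α} {X : Finset α → Finset β} {f g : ℕ → ℕ}
    (hf : ∀ U ⊆ R, #(evenAltWords b U) = f #U) (hg : ∀ U ⊆ R, #(X U) = g #U) :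
    #(evenSplits b R X) = binomialConv f g #R := by
  have hsum := sum_powerset_apply_card (fun j => f j * g (#R - j)) (x := R)
  simp only [smul_eq_mul] at hsum
  rw [evenSplits, card_sigma, binomialConv, ← hsum]
  refine sum_congr rfl fun U hU => ?_
  rw [mem_powerset] at hU
  rw [card_product, hf U hU, hg _ sdiff_subset, card_sdiff_of_subset hU]

lemma card_altWords (b : Bool) (S : Finset α) : #(altWords b S) = zigzag #S := by
  induction hn : #S using Nat.strong_induction_on generalizing b S with
  | _ n ih =>
    subst hn
    obtain rfl | hS := S.eq_empty_or_nonempty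
    · simp [altWords_empty, zigzag]
    obtain ⟨m, hm, hext⟩ := exists_mem_forall_erase_dirLT b hS
    have hlt (U) (hU : U ⊆ S.erase m) : #U < #S :=
      (card_le_card hU).trans_lt (card_erase_lt_of_mem hm)
    have hrec := card_filter_altWords_eq_card_evenSplits hm hext
      (P := fun _ => True) (P' := fun _ => True) (by simp)
    simp only [filter_true] at hrec
    rw [hrec, ← card_erase_add_one hm, zigzag_succ]
    refine card_evenSplits (fun U hU => ?_) (fun U hU => ih _ (hlt U hU) _ U rfl)
    rw [card_evenAltWords, ih _ (hlt U hU) b U rfl, evenZigzag]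

lemma card_evenAltWords_eq_evenZigzag : #(evenAltWords b S) = evenZigzag #S := by
  rw [card_evenAltWords, card_altWords, evenZigzag]

lemma card_filter_altWords_msLen (k : ℕ) (b : Bool) (S : Finset ℕ) :
    #{l ∈ altWords b S | msLen (altRule b) l = k} = zigzagStirling k #S := by
  induction k generalizing b S with
  | zero =>
    obtain rfl | hS := S.eq_empty_or_nonempty
    · simp [altWords_empty, zigzagStirling, filter_singleton, msLen_eq_zero_iff]
    · have hne : #S ≠ 0 := hS.card_ne_zero
      rw [zigzagStirling, if_neg hne, card_eq_zero, filter_eq_empty_iff]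
      intro l hl h
      exact hne (by
        rw [← length_eq_card_of_mem_altWords hl, msLen_eq_zero_iff.1 h, List.length_nil])
  | succ k ih =>
    obtain rfl | hS := S.eq_empty_or_nonempty
    · simp [altWords_empty, zigzagStirling, filter_singleton, msLen_eq_zero_iff.2]
    obtain ⟨m, hm, hext⟩ := exists_mem_forall_erase_dirLT b hS
    have hrec := card_filter_altWords_eq_card_evenSplits hm hext
      (P := fun l => msLen (altRule b) l = k + 1) (P' := fun l => msLen (altRule (!b)) l = k)
      (fun hu hv => by rw [msLen_altRule_append_cons hu hv, Nat.add_right_cancel_iff])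
    rw [← card_erase_add_one hm, zigzagStirling]
    convert hrec.trans (card_evenSplits (fun _ _ => card_evenAltWords_eq_evenZigzag)
      fun T _ => by convert ih (!b) T)

end Recurrence

section OneLine

variable {n : ℕ}

lemma isUpDownPerm_iff_alternating (π : Perm (Fin n)) :
    IsUpDownPerm π ↔ Alternating true (oneLine π) := by
  rw [alternating_iff_getElem]
  simp only [oneLine, List.length_ofFn, List.getElem_ofFn, DirLT]
  constructor
  · intro h i hi
    simpa using h ⟨i, by lia⟩ ⟨i + 1, hi⟩ rfl
  · rintro h ⟨i, hi⟩ ⟨j, hj⟩ rfl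
    simpa using h i hj

lemma stStat_eq_msLen_altRule (π : Perm (Fin n)) : stStat π = msLen (altRule true) (oneLine π) := by
  have : (fun i => i % 2 == 0) = altRule true := by funext i; simp [altRule]
  rw [stStat, msStat, this]

lemma oneLine_injective : Function.Injective (oneLine : Perm (Fin n) → List ℕ) := fun _ _ h =>
  Equiv.ext fun i => Fin.ext (congrFun (List.ofFn_injective h) i)

lemma exists_oneLine_eq_iff {l : List ℕ} :
    (∃ π : Perm (Fin n), oneLine π = l) ↔ l.Nodup ∧ l.toFinset = range n := by
  constructor
  · rintro ⟨π, rfl⟩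
    refine ⟨List.nodup_ofFn.2 (Fin.val_injective.comp π.injective), ?_⟩
    ext x
    simp only [oneLine, List.mem_toFinset, List.mem_ofFn, mem_range]
    exact ⟨by rintro ⟨i, rfl⟩; exact (π i).isLt, fun hx => ⟨π.symm ⟨x, hx⟩, by simp⟩⟩
  · rintro ⟨hnodup, hrange⟩
    have hlen : l.length = n := by
      rw [← List.toFinset_card_of_nodup hnodup, hrange, card_range]
    subst hlen
    let f (i : Fin l.length) : Fin l.length :=
      ⟨l[i], mem_range.1 (hrange ▸ List.mem_toFinset.2 (List.getElem_mem i.isLt))⟩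
    have hf : Function.Injective f := fun i j hij =>
      Fin.ext (hnodup.getElem_inj_iff.1 (congrArg Fin.val hij))
    refine ⟨Equiv.ofBijective f hf.bijective_of_finite, ?_⟩
    simp [oneLine, f]

lemma card_upDownPerm_stStat (n k : ℕ) :
    Nat.card {π : Perm (Fin n) // IsUpDownPerm π ∧ stStat π = k} = zigzagStirling k n := by
  classical
  rw [Nat.subtype_card {π : Perm (Fin n) | IsUpDownPerm π ∧ stStat π = k} (by simp)]
  conv_rhs => rw [← card_range n, ← card_filter_altWords_msLen k true]
  rw [← card_image_of_injective _ oneLine_injective]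
  congr 1
  ext l
  simp only [mem_image, mem_filter, mem_altWords, ← exists_oneLine_eq_iff,
    isUpDownPerm_iff_alternating, stStat_eq_msLen_altRule]
  grind

end OneLine

section CycleSplit

variable {α : Type*} [DecidableEq α] {l w w' : List α} {τ τ' : Perm α} {m x : α}

lemma commute_formPerm (hτ : ∀ x ∈ l, τ x = x) : Commute l.formPerm τ :=
  Perm.Disjoint.commute fun x =>
    (em (x ∈ l)).symm.imp List.formPerm_apply_of_notMem (hτ x)

lemma formPerm_mul_pow_apply_getElem (hl : l.Nodup) (hτ : ∀ x ∈ l, τ x = x) (k : ℕ) {i : ℕ}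
    (hi : i < l.length) : ((l.formPerm * τ) ^ k) l[i] =
      l[(i + k) % l.length]'(Nat.mod_lt _ (i.zero_le.trans_lt hi)) := by
  rw [(commute_formPerm hτ).mul_pow, Perm.mul_apply,
    Perm.pow_apply_eq_self_of_apply_eq_self (hτ _ (List.getElem_mem hi)),
    List.formPerm_pow_apply_getElem l hl]

lemma formPerm_mul_pow_apply_of_notMem (hτ : ∀ x ∈ l, τ x = x) (hx : x ∉ l) (k : ℕ) :
    ((l.formPerm * τ) ^ k) x = (τ ^ k) x := by
  rw [(commute_formPerm hτ).eq, (commute_formPerm hτ).symm.mul_pow, Perm.mul_apply,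
    Perm.pow_apply_eq_self_of_apply_eq_self (List.formPerm_apply_of_notMem hx)]

lemma formPerm_cons_mul_pow_apply_head (hl : (m :: w).Nodup) (hτ : ∀ x ∈ m :: w, τ x = x)
    {i : ℕ} (hi : i < (m :: w).length) :
    (((m :: w).formPerm * τ) ^ i) m = (m :: w)[i] := by
  have := formPerm_mul_pow_apply_getElem hl hτ i (Nat.zero_lt_of_lt hi)
  simpa only [List.getElem_cons_zero, zero_add, Nat.mod_eq_of_lt hi] using this

lemma minimalPeriod_formPerm_mul_of_mem (hl : l.Nodup) (hτ : ∀ x ∈ l, τ x = x) (hx : x ∈ l) :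
    Function.minimalPeriod (l.formPerm * τ) x = l.length := by
  obtain ⟨i, hi, rfl⟩ := List.getElem_of_mem hx
  refine Nat.dvd_right_iff_eq.1 fun k => ?_
  rw [← Function.isPeriodicPt_iff_minimalPeriod_dvd, Function.IsPeriodicPt, Function.IsFixedPt,
    ← Perm.coe_pow, formPerm_mul_pow_apply_getElem hl hτ k hi, hl.getElem_inj_iff]
  calc (i + k) % l.length = i ↔ i + k ≡ i + 0 [MOD l.length] := by
        rw [Nat.ModEq, add_zero, Nat.mod_eq_of_lt hi]
    _ ↔ k ≡ 0 [MOD l.length] := ⟨Nat.ModEq.add_left_cancel' i, Nat.ModEq.add_left i⟩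
    _ ↔ l.length ∣ k := Nat.modEq_zero_iff_dvd

lemma minimalPeriod_formPerm_mul_of_notMem (hτ : ∀ x ∈ l, τ x = x) (hx : x ∉ l) :
    Function.minimalPeriod (l.formPerm * τ) x = Function.minimalPeriod τ x := by
  refine Function.minimalPeriod_eq_minimalPeriod_iff.2 fun k => ?_
  simp only [Function.IsPeriodicPt, Function.IsFixedPt, ← Perm.coe_pow,
    formPerm_mul_pow_apply_of_notMem hτ hx]

lemma formPerm_cons_mul_inj (hl : (m :: w).Nodup) (hl' : (m :: w').Nodup)
    (hτ : ∀ x ∈ m :: w, τ x = x) (hτ' : ∀ x ∈ m :: w', τ' x = x)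
    (h : (m :: w).formPerm * τ = (m :: w').formPerm * τ') : w = w' ∧ τ = τ' := by
  have hw : m :: w = m :: w' := by
    refine List.ext_getElem ?_ fun i hi hi' => ?_
    · rw [← minimalPeriod_formPerm_mul_of_mem hl hτ List.mem_cons_self, h,
        minimalPeriod_formPerm_mul_of_mem hl' hτ' List.mem_cons_self]
    · rw [← formPerm_cons_mul_pow_apply_head hl hτ hi, h,
        formPerm_cons_mul_pow_apply_head hl' hτ' hi']
  obtain rfl := List.cons_injective hw
  exact ⟨rfl, mul_left_cancel h⟩

variable [Fintype α] {σ : Perm α} {S : Finset α}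

lemma exists_formPerm_cons_eq_cycleOf (σ : Perm α) (m : α) : ∃ w : List α,
    (m :: w).Nodup ∧ (m :: w).formPerm = σ.cycleOf m ∧ ∀ x ∈ m :: w, σ.SameCycle m x := by
  by_cases hm : σ m = m
  · exact ⟨[], by simp, by simp [σ.cycleOf_eq_one_iff.2 hm], by simpa using Perm.SameCycle.refl σ m⟩
  · have hsupp : m ∈ σ.support := Perm.mem_support.2 hm
    obtain ⟨a, w, haw⟩ := List.exists_cons_of_ne_nil (mt Perm.toList_eq_nil_iff.1 (not_not.2 hsupp))
    obtain rfl : a = m := by simpa [haw] using σ.toList_getElem_zero m hsupp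
    refine ⟨w, haw ▸ σ.nodup_toList a, haw ▸ σ.formPerm_toList a, fun x hx => ?_⟩
    exact (Perm.mem_toList_iff.1 (haw ▸ hx)).1

/-- A permutation of the letters in `S ∪ {m}` that decomposes as the cycle `(m, w₁, w₂, …)` followed
by a permutation `τ` of the remaining letters; it is then `(m :: w).formPerm * τ`. -/
structure IsCycleSplit (S : Finset α) (m : α) (w : List α) (τ : Perm α) : Prop where
  nodup : w.Nodup
  toFinset_subset : w.toFinset ⊆ S.erase m
  support_subset : τ.support ⊆ S.erase m \ w.toFinset

lemma IsCycleSplit.nodup_cons (h : IsCycleSplit S m w τ) : (m :: w).Nodup :=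
  List.nodup_cons.2
    ⟨fun hm => notMem_erase m S (h.toFinset_subset (List.mem_toFinset.2 hm)), h.nodup⟩

lemma IsCycleSplit.apply_eq_self (h : IsCycleSplit S m w τ) : ∀ x ∈ m :: w, τ x = x := by
  intro x hx
  refine Perm.notMem_support.1 fun hτx => ?_
  have := h.support_subset hτx
  grind [List.mem_toFinset]

lemma IsCycleSplit.support_mul_subset (h : IsCycleSplit S m w τ) (hm : m ∈ S) :
    ((m :: w).formPerm * τ).support ⊆ S := by
  refine (Perm.support_mul_le _ _).trans (union_subset ?_ ?_)
  · refine (List.support_formPerm_le _).trans ?_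
    rw [List.toFinset_cons]
    exact insert_subset hm (h.toFinset_subset.trans (erase_subset m S))
  · exact h.support_subset.trans (sdiff_subset.trans (erase_subset m S))

lemma exists_isCycleSplit (m : α) (hσ : σ.support ⊆ S) :
    ∃ w τ, IsCycleSplit S m w τ ∧ (m :: w).formPerm * τ = σ := by
  obtain ⟨w, hnodup, hform, hsame⟩ := exists_formPerm_cons_eq_cycleOf σ m
  have hwS : ∀ x ∈ w, x ∈ S.erase m := fun x hx => by
    have hxm : x ≠ m := by grind
    refine mem_erase.2 ⟨hxm, hσ (Perm.mem_support.2 fun hx' => hxm ?_)⟩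
    exact (hsame x (by simp [hx])).symm.eq_of_left hx'
  have hfix : ∀ x ∈ m :: w, ((σ.cycleOf m)⁻¹ * σ) x = x := fun x hx => by
    rw [Perm.mul_apply, Perm.inv_eq_iff_eq, (hsame x hx).cycleOf_apply]
  refine ⟨w, (σ.cycleOf m)⁻¹ * σ, ⟨(List.nodup_cons.1 hnodup).2,
    fun x hx => hwS x (List.mem_toFinset.1 hx), fun x hx => ?_⟩,
    by rw [hform, mul_inv_cancel_left]⟩
  have hxS : x ∈ S := by
    refine hσ ((Perm.support_mul_le _ _).trans (union_subset ?_ subset_rfl) hx)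
    rw [Perm.support_inv]
    exact σ.support_cycleOf_le m
  have hxw : x ∉ m :: w := fun hxw => Perm.mem_support.1 hx (hfix x hxw)
  grind [List.mem_toFinset]

end CycleSplit

section CycleUpDown

variable {n k : ℕ} {σ τ : Perm (Fin n)} {m x : Fin n} {l w : List (Fin n)}
  {S T : Finset (Fin n)}

lemma isOrbitMin_formPerm_mul_of_notMem (hτ : ∀ x ∈ l, τ x = x) (hx : x ∉ l) :
    IsOrbitMin (l.formPerm * τ) x ↔ IsOrbitMin τ x := by
  simp only [IsOrbitMin, formPerm_mul_pow_apply_of_notMem hτ hx]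

lemma isOrbitMin_formPerm_cons_mul_of_mem (hl : (m :: w).Nodup) (hτ : ∀ x ∈ m :: w, τ x = x)
    (hmin : ∀ x ∈ w, m < x) (hx : x ∈ m :: w) :
    IsOrbitMin ((m :: w).formPerm * τ) x ↔ x = m := by
  have hle : ∀ y ∈ m :: w, m ≤ y := by simpa using fun y hy => (hmin y hy).le
  obtain ⟨i, hi, rfl⟩ := List.getElem_of_mem hx
  refine ⟨fun h => le_antisymm ?_ (hle _ hx), fun h k => ?_⟩
  · have := h ((m :: w).length - i)
    simpa only [formPerm_mul_pow_apply_getElem hl hτ _ hi, Nat.add_sub_cancel' hi.le,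
      Nat.mod_self, List.getElem_cons_zero] using this
  · rw [formPerm_mul_pow_apply_getElem hl hτ k hi, h]
    exact hle _ (List.getElem_mem _)

lemma cycleUpDownAt_formPerm_mul_of_notMem (hτ : ∀ x ∈ l, τ x = x) (hx : x ∉ l) :
    CycleUpDownAt (l.formPerm * τ) x ↔ CycleUpDownAt τ x := by
  simp only [CycleUpDownAt, cycLen, minimalPeriod_formPerm_mul_of_notMem hτ hx,
    formPerm_mul_pow_apply_of_notMem hτ hx]

lemma cycleUpDownAt_formPerm_cons_mul_head_iff (hl : (m :: w).Nodup)
    (hτ : ∀ x ∈ m :: w, τ x = x) (hmin : ∀ x ∈ w, m < x) :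
    CycleUpDownAt ((m :: w).formPerm * τ) m ↔ Alternating false w := by
  have hw : Alternating true (m :: w) ↔ Alternating false w :=
    alternating_cons_iff (by simpa [DirLT] using hmin)
  rw [← hw, alternating_iff_getElem, CycleUpDownAt, cycLen,
    minimalPeriod_formPerm_mul_of_mem hl hτ List.mem_cons_self]
  refine forall₂_congr fun i hi => ?_
  rw [formPerm_cons_mul_pow_apply_head hl hτ hi,
    formPerm_cons_mul_pow_apply_head hl hτ (Nat.lt_of_succ_lt hi)]
  simp [DirLT]

lemma cycLen_eq_one_of_apply_eq_self (hx : τ x = x) : cycLen τ x = 1 :=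
  Function.minimalPeriod_eq_one_iff_isFixedPt.2 hx

lemma isCUD_formPerm_cons_mul_iff (hl : (m :: w).Nodup) (hτ : ∀ x ∈ m :: w, τ x = x)
    (hmin : ∀ x ∈ w, m < x) :
    IsCUD ((m :: w).formPerm * τ) ↔ Alternating false w ∧ IsCUD τ := by
  rw [← cycleUpDownAt_formPerm_cons_mul_head_iff hl hτ hmin]
  constructor
  · refine fun h => ⟨h m ?_, fun x hxmin => ?_⟩
    · exact (isOrbitMin_formPerm_cons_mul_of_mem hl hτ hmin List.mem_cons_self).2 rfl
    · by_cases hx : x ∈ m :: w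
      · intro i hi
        rw [cycLen_eq_one_of_apply_eq_self (hτ x hx)] at hi
        lia
      · exact (cycleUpDownAt_formPerm_mul_of_notMem hτ hx).1
          (h x ((isOrbitMin_formPerm_mul_of_notMem hτ hx).2 hxmin))
  · rintro ⟨hm, h⟩ x hxmin
    by_cases hx : x ∈ m :: w
    · rwa [(isOrbitMin_formPerm_cons_mul_of_mem hl hτ hmin hx).1 hxmin]
    · exact (cycleUpDownAt_formPerm_mul_of_notMem hτ hx).2
        (h x ((isOrbitMin_formPerm_mul_of_notMem hτ hx).1 hxmin))

lemma forall_odd_cycLen_formPerm_cons_mul_iff (hl : (m :: w).Nodup)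
    (hτ : ∀ x ∈ m :: w, τ x = x) :
    (∀ x, Odd (cycLen ((m :: w).formPerm * τ) x)) ↔ Even w.length ∧ ∀ x, Odd (cycLen τ x) := by
  have hmem : ∀ x ∈ m :: w, (Odd (cycLen ((m :: w).formPerm * τ) x) ↔ Even w.length) ∧
      Odd (cycLen τ x) := fun x hx => by
    rw [cycLen_eq_one_of_apply_eq_self (hτ x hx), cycLen,
      minimalPeriod_formPerm_mul_of_mem hl hτ hx, List.length_cons, Nat.odd_add_one,
      Nat.not_odd_iff_even]
    exact ⟨Iff.rfl, odd_one⟩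
  have hnotMem : ∀ x ∉ m :: w, cycLen ((m :: w).formPerm * τ) x = cycLen τ x :=
    fun x hx => minimalPeriod_formPerm_mul_of_notMem hτ hx
  refine ⟨fun h => ⟨(hmem m List.mem_cons_self).1.1 (h m), fun x => ?_⟩, fun h x => ?_⟩
  all_goals by_cases hx : x ∈ m :: w
  · exact (hmem x hx).2
  · exact hnotMem x hx ▸ h x
  · exact (hmem x hx).1.2 h.1
  · exact hnotMem x hx ▸ h.2 x

open Classical in
lemma card_filter_isOrbitMin_formPerm_cons_mul (hl : (m :: w).Nodup)
    (hτ : ∀ x ∈ m :: w, τ x = x) (hmin : ∀ x ∈ w, m < x) (hm : m ∈ S) :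
    #{x ∈ S | IsOrbitMin ((m :: w).formPerm * τ) x} =
      #{x ∈ S.erase m \ w.toFinset | IsOrbitMin τ x} + 1 := by
  rw [← card_insert_of_notMem (a := m) (by simp)]
  congr 1
  ext x
  by_cases hx : x ∈ m :: w
  · have := isOrbitMin_formPerm_cons_mul_of_mem hl hτ hmin hx
    grind [List.mem_toFinset]
  · have := isOrbitMin_formPerm_mul_of_notMem hτ hx
    grind [List.mem_toFinset]

/-- The cycle-up-down permutations of the letters in `S`, encoded as permutations of `Fin n` that
fix the complement of `S`, with all cycles of odd length and exactly `k` of them inside `S`. -/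
noncomputable def oddCUDPerms (S : Finset (Fin n)) (k : ℕ) : Finset (Perm (Fin n)) :=
  open Classical in
  {σ | σ.support ⊆ S ∧ (IsCUD σ ∧ ∀ x, Odd (cycLen σ x)) ∧ #{x ∈ S | IsOrbitMin σ x} = k}

open Classical in
lemma mem_oddCUDPerms : σ ∈ oddCUDPerms S k ↔ σ.support ⊆ S ∧
    (IsCUD σ ∧ ∀ x, Odd (cycLen σ x)) ∧ #{x ∈ S | IsOrbitMin σ x} = k := by
  simp [oddCUDPerms]

lemma IsCycleSplit.mul_mem_oddCUDPerms_iff (h : IsCycleSplit S m w τ) (hm : m ∈ S)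
    (hmin : ∀ x ∈ S.erase m, m < x) :
    (m :: w).formPerm * τ ∈ oddCUDPerms S (k + 1) ↔
      w ∈ evenAltWords false w.toFinset ∧ τ ∈ oddCUDPerms (S.erase m \ w.toFinset) k := by
  have hlt : ∀ x ∈ w, m < x := fun x hx => hmin x (h.toFinset_subset (List.mem_toFinset.2 hx))
  rw [mem_oddCUDPerms, mem_oddCUDPerms, mem_evenAltWords,
    isCUD_formPerm_cons_mul_iff h.nodup_cons h.apply_eq_self hlt,
    forall_odd_cycLen_formPerm_cons_mul_iff h.nodup_cons h.apply_eq_self,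
    card_filter_isOrbitMin_formPerm_cons_mul h.nodup_cons h.apply_eq_self hlt hm,
    Nat.add_right_cancel_iff]
  have := h.nodup
  have := h.support_subset
  have := h.support_mul_subset hm
  tauto

lemma isCycleSplit_of_mem (hT : T ⊆ S.erase m) (hw : w ∈ evenAltWords false T)
    (hτ : τ ∈ oddCUDPerms (S.erase m \ T) k) : IsCycleSplit S m w τ := by
  obtain ⟨⟨hnodup, rfl⟩, -⟩ := mem_evenAltWords.1 hw
  exact ⟨hnodup, hT, (mem_oddCUDPerms.1 hτ).1⟩

lemma card_oddCUDPerms_add_one (hm : m ∈ S) (hmin : ∀ x ∈ S.erase m, m < x) (k : ℕ) :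
    #(oddCUDPerms S (k + 1)) =
      #(evenSplits false (S.erase m) fun T => oddCUDPerms T k) := by
  symm
  refine card_bij (fun p _ => (m :: p.2.1).formPerm * p.2.2) ?_ ?_ ?_
  · rintro ⟨T, w, τ⟩ h
    obtain ⟨hT, hw, hτ⟩ := mem_evenSplits.1 h
    obtain ⟨⟨-, rfl⟩, -⟩ := mem_evenAltWords.1 hw
    exact ((isCycleSplit_of_mem hT hw hτ).mul_mem_oddCUDPerms_iff hm hmin).2 ⟨hw, hτ⟩
  · rintro ⟨T, w, τ⟩ h ⟨T', w', τ'⟩ h' heq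
    obtain ⟨hT, hw, hτ⟩ := mem_evenSplits.1 h
    obtain ⟨hT', hw', hτ'⟩ := mem_evenSplits.1 h'
    have split := isCycleSplit_of_mem hT hw hτ
    have split' := isCycleSplit_of_mem hT' hw' hτ'
    obtain ⟨⟨-, rfl⟩, -⟩ := mem_evenAltWords.1 hw
    obtain ⟨⟨-, rfl⟩, -⟩ := mem_evenAltWords.1 hw'
    obtain ⟨rfl, rfl⟩ := formPerm_cons_mul_inj split.nodup_cons split'.nodup_cons
      split.apply_eq_self split'.apply_eq_self heq
    rfl
  · intro σ hσ
    obtain ⟨w, τ, split, rfl⟩ := exists_isCycleSplit m (mem_oddCUDPerms.1 hσ).1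
    obtain ⟨hw, hτ⟩ := (split.mul_mem_oddCUDPerms_iff hm hmin).1 hσ
    exact ⟨⟨w.toFinset, w, τ⟩, mem_evenSplits.2 ⟨split.toFinset_subset, hw, hτ⟩, rfl⟩

lemma isOrbitMin_of_support_subset (hσ : σ.support ⊆ S)
    (hmin : ∀ x ∈ S.erase m, m < x) : IsOrbitMin σ m := fun k => by
  by_cases h : (σ ^ k) m = m
  · exact h.ge
  · have hmem : (σ ^ k) m ∈ σ.support :=
      Perm.pow_apply_mem_support.2 (Perm.support_pow_le σ k (Perm.mem_support.2 h))
    exact (hmin _ (mem_erase.2 ⟨h, hσ hmem⟩)).le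

lemma oddCUDPerms_empty_zero : oddCUDPerms (∅ : Finset (Fin n)) 0 = {1} := by
  ext σ
  rw [mem_oddCUDPerms, subset_empty, Perm.support_eq_empty_iff, mem_singleton]
  refine ⟨fun h => h.1, ?_⟩
  rintro rfl
  have hlen (x : Fin n) : cycLen 1 x = 1 := cycLen_eq_one_of_apply_eq_self rfl
  exact ⟨rfl, ⟨fun x _ i hi => by simp [hlen] at hi, fun x => hlen x ▸ odd_one⟩, by simp⟩

lemma oddCUDPerms_empty_add_one : oddCUDPerms (∅ : Finset (Fin n)) (k + 1) = ∅ := by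
  ext σ
  simp [mem_oddCUDPerms]

lemma oddCUDPerms_zero_of_nonempty (hS : S.Nonempty) : oddCUDPerms S 0 = ∅ := by
  classical
  obtain ⟨m, hm, hmin⟩ := exists_mem_forall_erase_dirLT true hS
  refine eq_empty_of_forall_notMem fun σ hσ => ?_
  obtain ⟨hsupp, -, hcard⟩ := mem_oddCUDPerms.1 hσ
  exact filter_eq_empty_iff.1 (card_eq_zero.1 hcard) hm
    (isOrbitMin_of_support_subset hsupp (by simpa [DirLT] using hmin))

lemma card_oddCUDPerms (S : Finset (Fin n)) (k : ℕ) :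
    #(oddCUDPerms S k) = zigzagStirling k #S := by
  induction k generalizing S with
  | zero =>
    obtain rfl | hS := S.eq_empty_or_nonempty
    · simp [oddCUDPerms_empty_zero, zigzagStirling]
    · simp [oddCUDPerms_zero_of_nonempty hS, zigzagStirling, hS.ne_empty]
  | succ k ih =>
    obtain rfl | hS := S.eq_empty_or_nonempty
    · simp [oddCUDPerms_empty_add_one, zigzagStirling]
    obtain ⟨m, hm, hmin⟩ := exists_mem_forall_erase_dirLT true hS
    rw [card_oddCUDPerms_add_one hm (by simpa [DirLT] using hmin), ← card_erase_add_one hm,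
      zigzagStirling]
    exact card_evenSplits (fun _ _ => card_evenAltWords_eq_evenZigzag) fun T _ => ih T

lemma card_oddCUD_cycleCount (n k : ℕ) :
    Nat.card {σ : Perm (Fin n) // IsCUD σ ∧ (∀ x, Odd (cycLen σ x)) ∧ cycleCount σ = k} =
      zigzagStirling k n := by
  classical
  rw [Nat.subtype_card (oddCUDPerms univ k), card_oddCUDPerms, card_univ, Fintype.card_fin]
  intro σ
  have hcount : cycleCount σ = #{x | IsOrbitMin σ x} := Nat.subtype_card _ (by simp)
  simp [mem_oddCUDPerms, hcount, and_assoc]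

end CycleUpDown

/-- `st` on up-down permutations vs. number of cycles on odd-cycle CUD. -/
theorem stmt8 (n k : ℕ) (hn : 1 ≤ n) (hk : 1 ≤ k) :
    Nat.card {π : Equiv.Perm (Fin n) // IsUpDownPerm π ∧ stStat π = k} =
      Nat.card {σ : Equiv.Perm (Fin n) //
        IsCUD σ ∧ (∀ x : Fin n, Odd (cycLen σ x)) ∧ cycleCount σ = k} := by
  rw [card_upDownPerm_stStat, card_oddCUD_cycleCount]
end

section
/- For all m ≥ 1 and k ≥ 1, the number of up-down permutations π of [2m] with exactly k left-to-right minima equals the number of cycle-up-down permutations of [2m] all of whose cycles have even length and which have exactly k cycles. -/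
open Equiv Finset

/-!
The bijection is Foata's fundamental transformation. Cut the one-line notation of `p` before each
left-to-right minimum and read every block as a cycle. The first entry of a block is its least
entry, so the blocks are cycles in standard form and the left-to-right minima of `p` become the
cycle minima of the image `foata p`; since the blocks occur in decreasing order of their first
entries, `p` can be recovered.

For `n` even, all blocks have even length if and only if all left-to-right minima stand at even
positions (counted from `0`). In that case a position has the same parity in its block as in `p`,
and `p` descends into each left-to-right minimum from an odd position. Hence `p` is up-down exactly
when every block is. An up-down `p` ascends from even to odd positions, so its left-to-right minima
do stand at even positions.
-/

/-- A division of the positions `0, …, n - 1` into intervals, the *blocks*, encoded by the map that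
sends each position to the first position of its block. -/
structure BlockDecomposition (n : ℕ) where
  start : Fin n → Fin n
  start_le : ∀ i, start i ≤ i
  start_eq_of_le : ∀ {i j}, start j ≤ i → i ≤ j → start i = start j

namespace BlockDecomposition

variable {n : ℕ} (B : BlockDecomposition n) {i j e : Fin n}

theorem start_start (i : Fin n) : B.start (B.start i) = B.start i :=
  B.start_eq_of_le le_rfl (B.start_le i)

theorem start_eq_start_iff_of_succ (hij : (j : ℕ) = i + 1) :
    B.start j = B.start i ↔ B.start j ≠ j := by
  have hj : B.start j ≤ j := B.start_le j
  have hi : B.start i ≤ i := B.start_le i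
  constructor
  · intro h hjj
    rw [← h, hjj] at hi
    lia
  · intro h
    exact (B.start_eq_of_le (by lia) (by lia)).symm

theorem exists_pred_of_start_ne (h : B.start i ≠ i) : ∃ j : Fin n, (i : ℕ) = j + 1 := by
  have hlt : B.start i < i := lt_of_le_of_ne (B.start_le i) h
  exact ⟨⟨i - 1, by lia⟩, by grind⟩

/-- `i` is the last position of its block. -/
def IsLast (i : Fin n) : Prop :=
  ∀ j : Fin n, (j : ℕ) = i + 1 → B.start j = j

theorem exists_isLast (i : Fin n) : ∃ e, B.IsLast e ∧ B.start e = B.start i ∧ i ≤ e := by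
  obtain ⟨e, hei, hmax⟩ :=
    Set.exists_max_image {e | B.start e = B.start i} id (Set.toFinite _) ⟨i, rfl⟩
  refine ⟨e, fun j hj ↦ ?_, hei, hmax i rfl⟩
  by_contra hne
  have hje : j ≤ e := hmax j (((B.start_eq_start_iff_of_succ hj).2 hne).trans hei)
  lia

/-- The successor of a position when every block is traversed cyclically. -/
def next (i : Fin n) : Fin n :=
  if h : ∃ hi : (i : ℕ) + 1 < n, B.start ⟨i + 1, hi⟩ ≠ ⟨i + 1, hi⟩ then ⟨i + 1, h.1⟩
  else B.start i

theorem next_of_succ (hij : (j : ℕ) = i + 1) (hj : B.start j ≠ j) : B.next i = j := by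
  obtain ⟨_, hlt⟩ := j
  subst hij
  exact dif_pos ⟨hlt, hj⟩

theorem next_of_isLast (hi : B.IsLast i) : B.next i = B.start i :=
  dif_neg fun ⟨_, hne⟩ ↦ hne (hi _ rfl)

theorem start_next (i : Fin n) : B.start (B.next i) = B.start i := by
  by_cases hi : B.IsLast i
  · rw [B.next_of_isLast hi, B.start_start]
  · obtain ⟨j, hij, hj⟩ : ∃ j : Fin n, (j : ℕ) = i + 1 ∧ B.start j ≠ j := by
      simpa [IsLast] using hi
    rw [B.next_of_succ hij hj, B.start_eq_start_iff_of_succ hij]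
    exact hj

theorem next_surjective : Function.Surjective B.next := by
  intro i
  by_cases hi : B.start i = i
  · obtain ⟨e, he, hei, -⟩ := B.exists_isLast i
    exact ⟨e, by rw [B.next_of_isLast he, hei, hi]⟩
  · obtain ⟨j, hj⟩ := B.exists_pred_of_start_ne hi
    exact ⟨j, B.next_of_succ hj hi⟩

/-- The permutation of the positions whose cycles are the blocks, each in increasing order. -/
noncomputable def rotate : Perm (Fin n) :=
  Equiv.ofBijective B.next (Finite.surjective_iff_bijective.1 B.next_surjective)

theorem rotate_of_succ (hij : (j : ℕ) = i + 1) (hj : B.start j ≠ j) : B.rotate i = j :=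
  B.next_of_succ hij hj

theorem rotate_of_isLast (hi : B.IsLast i) : B.rotate i = B.start i :=
  B.next_of_isLast hi

theorem start_rotate_pow (k : ℕ) (i : Fin n) : B.start ((B.rotate ^ k) i) = B.start i := by
  induction k with
  | zero => rfl
  | succ k ih =>
    rw [pow_succ', Perm.mul_apply, ← ih]
    exact B.start_next _

theorem rotate_pow_start {k : ℕ} (hi : (i : ℕ) = B.start i + k) :
    (B.rotate ^ k) (B.start i) = i := by
  induction k generalizing i with
  | zero => exact Fin.ext hi.symm
  | succ k ih =>
    have hne : B.start i ≠ i := fun h ↦ by rw [h] at hi; lia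
    obtain ⟨j, hj⟩ := B.exists_pred_of_start_ne hne
    have hstart : B.start i = B.start j := (B.start_eq_start_iff_of_succ hj).2 hne
    rw [pow_succ', Perm.mul_apply, hstart, ih (by rw [← hstart]; lia)]
    exact B.rotate_of_succ hj hne

theorem sameCycle_rotate_start (i : Fin n) : B.rotate.SameCycle (B.start i) i := by
  have hle : B.start i ≤ i := B.start_le i
  exact ⟨(i - B.start i : ℕ), by rw [zpow_natCast, B.rotate_pow_start (by lia)]⟩

theorem sameCycle_rotate_iff : B.rotate.SameCycle i j ↔ B.start i = B.start j := by
  constructor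
  · intro h
    obtain ⟨k, rfl⟩ := h.exists_nat_pow_eq
    rw [B.start_rotate_pow]
  · intro h
    exact (B.sameCycle_rotate_start i).symm.trans (h ▸ B.sameCycle_rotate_start j)

theorem cycLen_rotate_start (i : Fin n) : cycLen B.rotate (B.start i) = cycLen B.rotate i := by
  obtain ⟨k, hk⟩ := (B.sameCycle_rotate_start i).exists_nat_pow_eq
  conv_rhs => rw [← hk]
  exact (Function.minimalPeriod_apply_iterate
    (B.rotate.injective.mem_periodicPts (B.start i)) k).symm

theorem start_add_cycLen_rotate_of_isLast (he : B.IsLast e) :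
    B.start e + cycLen B.rotate e = (e : ℕ) + 1 := by
  have hle : B.start e ≤ e := B.start_le e
  have hper : Function.IsPeriodicPt B.rotate (e - B.start e + 1) (B.start e) := by
    rw [Function.IsPeriodicPt, Function.IsFixedPt, Perm.iterate_eq_pow, pow_succ', Perm.mul_apply,
      B.rotate_pow_start (by lia), B.rotate_of_isLast he]
  have hmin : ∀ k < (e : ℕ) - B.start e + 1, k ≠ 0 →
      ¬ Function.IsPeriodicPt B.rotate k (B.start e) := by
    intro k hk hk0 hfix
    obtain ⟨j, hj⟩ : ∃ j : Fin n, (j : ℕ) = B.start e + k := ⟨⟨_, by lia⟩, rfl⟩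
    have hje : B.start j = B.start e := B.start_eq_of_le (by lia) (by lia)
    have hpow : (B.rotate ^ k) (B.start e) = j := hje ▸ B.rotate_pow_start (by rw [hje, hj])
    have hstart : B.start e = j := hfix.symm.trans hpow
    lia
  have hlen : cycLen B.rotate (B.start e) = e - B.start e + 1 := by
    refine le_antisymm (hper.minimalPeriod_le (by lia)) (not_lt.1 fun hlt ↦ ?_)
    exact hmin _ hlt (hper.minimalPeriod_pos (by lia)).ne'
      (Function.isPeriodicPt_minimalPeriod _ _)
  rw [← B.cycLen_rotate_start, hlen]
  lia

theorem lt_cycLen_rotate_iff {k : ℕ} :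
    k < cycLen B.rotate i ↔ ∃ j : Fin n, (j : ℕ) = B.start i + k ∧ B.start j = B.start i := by
  constructor
  · intro hk
    obtain ⟨e, he, hei, -⟩ := B.exists_isLast i
    have hlen := B.start_add_cycLen_rotate_of_isLast he
    rw [← B.cycLen_rotate_start, hei, B.cycLen_rotate_start] at hlen
    obtain ⟨j, hj⟩ : ∃ j : Fin n, (j : ℕ) = B.start i + k := ⟨⟨_, by lia⟩, rfl⟩
    exact ⟨j, hj, (B.start_eq_of_le (by rw [hei]; lia) (by lia)).trans hei⟩
  · rintro ⟨j, hj, hji⟩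
    obtain ⟨e, he, hej, hje⟩ := B.exists_isLast j
    have hlen := B.start_add_cycLen_rotate_of_isLast he
    rw [← B.cycLen_rotate_start, hej, hji, B.cycLen_rotate_start] at hlen
    lia

theorem even_start_of_even_cycLen_rotate (h : ∀ i, Even (cycLen B.rotate i)) (i : Fin n) :
    Even (B.start i : ℕ) := by
  induction i using WellFoundedLT.induction with
  | _ i ih =>
  rcases Nat.eq_zero_or_pos (B.start i) with hzero | hpos
  · simp [hzero]
  · obtain ⟨e, hsucc⟩ : ∃ e : Fin n, (e : ℕ) + 1 = B.start i :=
      ⟨⟨B.start i - 1, by lia⟩, Nat.sub_add_cancel hpos⟩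
    have he : B.IsLast e := fun j hj ↦ by
      obtain rfl : j = B.start i := Fin.ext (hj.trans hsucc)
      exact B.start_start i
    have hle : B.start i ≤ i := B.start_le i
    rw [← hsucc, ← B.start_add_cycLen_rotate_of_isLast he]
    exact (ih e (by lia)).add (h e)

theorem even_cycLen_rotate_of_even_start (hn : Even n) (h : ∀ i, Even (B.start i : ℕ))
    (i : Fin n) : Even (cycLen B.rotate i) := by
  obtain ⟨e, he, hei, -⟩ := B.exists_isLast i
  rw [← B.cycLen_rotate_start, ← hei, B.cycLen_rotate_start]
  refine (Nat.even_add.1 ?_).1 (h e)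
  rw [B.start_add_cycLen_rotate_of_isLast he]
  rcases (Nat.succ_le_of_lt e.2).lt_or_eq with hlt | heq
  · have := h ⟨e + 1, hlt⟩
    rwa [he _ rfl] at this
  · rwa [← Nat.succ_eq_add_one, heq]

theorem forall_even_cycLen_rotate_iff (hn : Even n) :
    (∀ i, Even (cycLen B.rotate i)) ↔ ∀ i, Even (B.start i : ℕ) :=
  ⟨B.even_start_of_even_cycLen_rotate, B.even_cycLen_rotate_of_even_start hn⟩

end BlockDecomposition

section FundamentalTransformation

variable {n : ℕ}

theorem isOrbitMin_iff_forall_sameCycle {σ : Perm (Fin n)} {x : Fin n} :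
    IsOrbitMin σ x ↔ ∀ y, σ.SameCycle x y → x ≤ y := by
  constructor
  · intro h y hxy
    obtain ⟨k, rfl⟩ := hxy.exists_nat_pow_eq
    exact h k
  · exact fun h k ↦ h _ ⟨k, by rw [zpow_natCast]⟩

theorem cycLen_conj (p σ : Perm (Fin n)) (x : Fin n) :
    cycLen (p * σ * p⁻¹) (p x) = cycLen σ x := by
  rw [cycLen, cycLen, Function.minimalPeriod_eq_minimalPeriod_iff]
  intro k
  rw [Function.IsPeriodicPt, Function.IsPeriodicPt, Perm.iterate_eq_pow, Perm.iterate_eq_pow,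
    conj_pow]
  simp [Function.IsFixedPt]

variable (p : Perm (Fin n)) {q : Perm (Fin n)} {i j : Fin n}

/-- `i` is the position of a left-to-right minimum of `p`. -/
def IsLRMin (i : Fin n) : Prop :=
  ∀ j < i, p i < p j

/-- The position of the least entry among `p 0, …, p i`. -/
def prefixArgmin (i : Fin n) : Fin n :=
  p.symm ((Iic i).inf' nonempty_Iic p)

theorem apply_prefixArgmin_le (hji : j ≤ i) : p (prefixArgmin p i) ≤ p j := by
  rw [prefixArgmin, p.apply_symm_apply]
  exact inf'_le _ (mem_Iic.2 hji)

theorem prefixArgmin_le (i : Fin n) : prefixArgmin p i ≤ i := by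
  obtain ⟨s, hs, heq⟩ := exists_mem_eq_inf' (nonempty_Iic (a := i)) p
  rw [prefixArgmin, heq, p.symm_apply_apply]
  exact mem_Iic.1 hs

theorem prefixArgmin_eq_iff :
    prefixArgmin p i = j ↔ j ≤ i ∧ ∀ k ≤ i, p j ≤ p k := by
  constructor
  · rintro rfl
    exact ⟨prefixArgmin_le p i, fun k hk ↦ apply_prefixArgmin_le p hk⟩
  · rintro ⟨hji, hmin⟩
    exact p.injective ((apply_prefixArgmin_le p hji).antisymm (hmin _ (prefixArgmin_le p i)))

/-- The blocks obtained by cutting the one-line notation of `p` before each left-to-right minimum: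
the block of `i` starts at the least entry among `p 0, …, p i`. -/
def lrMinBlocks : BlockDecomposition n where
  start := prefixArgmin p
  start_le := prefixArgmin_le p
  start_eq_of_le hji hij := (prefixArgmin_eq_iff p).2
    ⟨hji, fun _ hk ↦ apply_prefixArgmin_le p (hk.trans hij)⟩

theorem apply_start_lrMinBlocks_le (hji : j ≤ i) : p ((lrMinBlocks p).start i) ≤ p j :=
  apply_prefixArgmin_le p hji

theorem start_lrMinBlocks_eq_self_iff : (lrMinBlocks p).start i = i ↔ IsLRMin p i := by
  refine (prefixArgmin_eq_iff p).trans ⟨fun h j hj ↦ ?_, fun h ↦ ⟨le_rfl, fun j hj ↦ ?_⟩⟩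
  · exact (h.2 j hj.le).lt_of_ne (p.injective.ne hj.ne')
  · rcases hj.lt_or_eq with hlt | rfl
    · exact (h j hlt).le
    · exact le_rfl

theorem isLRMin_start_lrMinBlocks (i : Fin n) : IsLRMin p ((lrMinBlocks p).start i) :=
  (start_lrMinBlocks_eq_self_iff p).1 ((lrMinBlocks p).start_start i)

/-- Foata's fundamental transformation: the permutation whose cycles, in standard form, are the
blocks of the one-line notation of `p` cut before each left-to-right minimum. -/
noncomputable def foata : Perm (Fin n) :=
  p * (lrMinBlocks p).rotate * p⁻¹

theorem foata_pow_apply (k : ℕ) (i : Fin n) :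
    (foata p ^ k) (p i) = p (((lrMinBlocks p).rotate ^ k) i) := by
  simp [foata, conj_pow]

theorem foata_apply (i : Fin n) : foata p (p i) = p ((lrMinBlocks p).rotate i) :=
  foata_pow_apply p 1 i

theorem foata_apply_of_not_isLRMin (hij : (j : ℕ) = i + 1) (hj : ¬ IsLRMin p j) :
    foata p (p i) = p j := by
  rw [← start_lrMinBlocks_eq_self_iff] at hj
  rw [foata_apply, (lrMinBlocks p).rotate_of_succ hij hj]

theorem foata_pow_apply_start {k : ℕ} (hi : (i : ℕ) = (lrMinBlocks p).start i + k) :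
    (foata p ^ k) (p ((lrMinBlocks p).start i)) = p i := by
  rw [foata_pow_apply, (lrMinBlocks p).rotate_pow_start hi]

theorem sameCycle_foata_iff :
    (foata p).SameCycle (p i) (p j) ↔ (lrMinBlocks p).start i = (lrMinBlocks p).start j := by
  simp [foata, Perm.sameCycle_conj, BlockDecomposition.sameCycle_rotate_iff]

theorem cycLen_foata (i : Fin n) : cycLen (foata p) (p i) = cycLen (lrMinBlocks p).rotate i :=
  cycLen_conj p _ i

theorem isOrbitMin_foata_iff : IsOrbitMin (foata p) (p i) ↔ IsLRMin p i := by
  rw [isOrbitMin_iff_forall_sameCycle, p.surjective.forall, ← start_lrMinBlocks_eq_self_iff]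
  simp only [sameCycle_foata_iff]
  constructor
  · intro h
    exact p.injective ((apply_start_lrMinBlocks_le p le_rfl).antisymm
      (h _ ((lrMinBlocks p).start_start i).symm))
  · intro hi j hij
    rw [← hi, hij]
    exact apply_start_lrMinBlocks_le p le_rfl

theorem lrmCount_eq_cycleCount_foata : lrmCount p = cycleCount (foata p) :=
  Nat.card_congr (p.subtypeEquiv fun _ ↦ (isOrbitMin_foata_iff p).symm)

theorem isLRMin_iff_exists_foata_apply_eq (hij : (j : ℕ) = i + 1) :
    IsLRMin p j ↔ ∃ l < j, foata p (p i) = p l := by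
  constructor
  · intro hj
    have hlast : (lrMinBlocks p).IsLast i := fun k hk ↦ by
      obtain rfl : k = j := Fin.ext (hk.trans hij.symm)
      exact (start_lrMinBlocks_eq_self_iff p).2 hj
    have hle := (lrMinBlocks p).start_le i
    refine ⟨(lrMinBlocks p).start i, by lia, ?_⟩
    rw [foata_apply, (lrMinBlocks p).rotate_of_isLast hlast]
  · rintro ⟨l, hl, heq⟩
    by_contra hj
    rw [foata_apply_of_not_isLRMin p hij hj] at heq
    exact hl.ne' (p.injective heq)

theorem isGreatest_isOrbitMin_foata_ne_of_lt (hi : IsLRMin p i) :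
    IsGreatest {x | IsOrbitMin (foata p) x ∧ ∀ j < i, p j ≠ x} (p i) := by
  refine ⟨⟨(isOrbitMin_foata_iff p).2 hi, fun j hj ↦ p.injective.ne hj.ne⟩, fun x hx ↦ ?_⟩
  obtain ⟨l, rfl⟩ := p.surjective x
  obtain ⟨hl, hil⟩ := hx
  rw [isOrbitMin_foata_iff] at hl
  have hle : i ≤ l := not_lt.1 fun hlt ↦ hil l hlt rfl
  rcases hle.lt_or_eq with hlt | rfl
  · exact (hl i hlt).le
  · exact le_rfl

variable {p} in
theorem isLRMin_iff_of_foata_eq (h : foata p = foata q)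
    (hpq : ∀ j < i, p j = q j) : IsLRMin p i ↔ IsLRMin q i := by
  by_cases hi : (i : ℕ) = 0
  · exact iff_of_true (fun j hj ↦ by lia) (fun j hj ↦ by lia)
  · obtain ⟨j, hj⟩ : ∃ j : Fin n, (i : ℕ) = j + 1 := ⟨⟨i - 1, by lia⟩, by grind⟩
    rw [isLRMin_iff_exists_foata_apply_eq p hj, isLRMin_iff_exists_foata_apply_eq q hj, h,
      hpq j (by lia)]
    exact exists_congr fun l ↦ and_congr_right fun hl ↦ by rw [hpq l hl]

variable {p} in
theorem apply_eq_of_foata_eq (h : foata p = foata q)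
    (hpq : ∀ j < i, p j = q j) : p i = q i := by
  have hiff := isLRMin_iff_of_foata_eq h hpq
  by_cases hi : IsLRMin p i
  · have hp := isGreatest_isOrbitMin_foata_ne_of_lt p hi
    simp +contextual only [h, hpq] at hp
    exact hp.unique (isGreatest_isOrbitMin_foata_ne_of_lt q (hiff.1 hi))
  · obtain ⟨j, hj⟩ := (lrMinBlocks p).exists_pred_of_start_ne
      (mt (start_lrMinBlocks_eq_self_iff p).1 hi)
    rw [← foata_apply_of_not_isLRMin p hj hi, h, hpq j (by lia),
      foata_apply_of_not_isLRMin q hj (mt hiff.2 hi)]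

theorem foata_injective : Function.Injective (foata : Perm (Fin n) → Perm (Fin n)) := by
  intro p q h
  ext1 i
  induction i using WellFoundedLT.induction with
  | _ i ih => exact apply_eq_of_foata_eq h ih

theorem foata_bijective : Function.Bijective (foata : Perm (Fin n) → Perm (Fin n)) :=
  Finite.injective_iff_bijective.1 foata_injective

theorem isCUD_foata_iff :
    IsCUD (foata p) ↔ ∀ i j : Fin n, (j : ℕ) = i + 1 → ¬ IsLRMin p j →
      ((i - (lrMinBlocks p).start i : ℕ) % 2 = 0 → p i < p j) ∧
      ((i - (lrMinBlocks p).start i : ℕ) % 2 = 1 → p j < p i) := by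
  set B := lrMinBlocks p
  constructor
  · intro h i j hij hj
    have hji : B.start j = B.start i :=
      (B.start_eq_start_iff_of_succ hij).2 (mt (start_lrMinBlocks_eq_self_iff p).1 hj)
    have hle : B.start i ≤ i := B.start_le i
    have hlen : i - B.start i + 1 < cycLen (foata p) (p (B.start i)) := by
      rw [cycLen_foata, B.cycLen_rotate_start, B.lt_cycLen_rotate_iff]
      exact ⟨j, by lia, hji⟩
    have hud := h _ ((isOrbitMin_foata_iff p).2 (isLRMin_start_lrMinBlocks p i)) _ hlen
    rwa [foata_pow_apply_start p (by lia), ← hji, foata_pow_apply_start p (by lia), hji] at hud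
  · intro h x hx k hk
    obtain ⟨s, rfl⟩ := p.surjective x
    have hs : B.start s = s :=
      (start_lrMinBlocks_eq_self_iff p).2 ((isOrbitMin_foata_iff p).1 hx)
    rw [cycLen_foata] at hk
    obtain ⟨i, hi, his⟩ := B.lt_cycLen_rotate_iff.1 (Nat.lt_of_succ_lt hk)
    obtain ⟨j, hj, hjs⟩ := B.lt_cycLen_rotate_iff.1 hk
    rw [hs] at hi his hj hjs
    have hjmin : ¬ IsLRMin p j := by
      rw [← start_lrMinBlocks_eq_self_iff, hjs]
      rintro rfl
      lia
    have hi_pow : (foata p ^ k) (p s) = p i :=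
      his ▸ foata_pow_apply_start p (by rw [his, hi])
    have hj_pow : (foata p ^ (k + 1)) (p s) = p j :=
      hjs ▸ foata_pow_apply_start p (by rw [hjs, hj])
    rw [hi_pow, hj_pow]
    have hud := h i j (by lia) hjmin
    rwa [his, show (i : ℕ) - s = k by lia] at hud

variable {p}

theorem IsUpDownPerm.even_of_isLRMin (hp : IsUpDownPerm p) {i : Fin n} (hi : IsLRMin p i) :
    Even (i : ℕ) := by
  by_contra hodd
  rw [Nat.not_even_iff] at hodd
  let j : Fin n := ⟨i - 1, by lia⟩
  have hasc : p j < p i := (hp j i (by grind)).1 (by grind)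
  exact hasc.asymm (hi j (by grind))

theorem isUpDownPerm_iff_isCUD_foata_of_even_start
    (heven : ∀ i, Even ((lrMinBlocks p).start i : ℕ)) :
    IsUpDownPerm p ↔ IsCUD (foata p) := by
  have hparity (i : Fin n) : (i - (lrMinBlocks p).start i : ℕ) % 2 = i % 2 := by
    have hle := (lrMinBlocks p).start_le i
    have := heven i
    grind
  simp only [isCUD_foata_iff, hparity]
  refine ⟨fun h i j hij _ ↦ h i j hij, fun h i j hij ↦ ?_⟩
  by_cases hj : IsLRMin p j
  · have hjeven := heven j
    rw [(start_lrMinBlocks_eq_self_iff p).2 hj] at hjeven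
    exact ⟨by grind, fun _ ↦ hj i (by lia)⟩
  · exact h i j hij hj

theorem isUpDownPerm_iff_isCUD_foata_and_even_cycLen (hn : Even n) :
    IsUpDownPerm p ↔ IsCUD (foata p) ∧ ∀ x, Even (cycLen (foata p) x) := by
  rw [p.surjective.forall]
  simp only [cycLen_foata, (lrMinBlocks p).forall_even_cycLen_rotate_iff hn]
  rw [← and_congr_left isUpDownPerm_iff_isCUD_foata_of_even_start]
  exact (and_iff_left_of_imp fun hp i ↦ hp.even_of_isLRMin (isLRMin_start_lrMinBlocks p i)).symm

end FundamentalTransformation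

/-- `lrm` on up-down permutations vs. number of cycles on even-cycle CUD. -/
theorem stmt9 (m k : ℕ) (hm : 1 ≤ m) (hk : 1 ≤ k) :
    Nat.card {π : Equiv.Perm (Fin (2 * m)) // IsUpDownPerm π ∧ lrmCount π = k} =
      Nat.card {σ : Equiv.Perm (Fin (2 * m)) //
        IsCUD σ ∧ (∀ x : Fin (2 * m), Even (cycLen σ x)) ∧ cycleCount σ = k} := by
  refine Nat.card_congr ((Equiv.ofBijective foata foata_bijective).subtypeEquiv fun p ↦ ?_)
  rw [Equiv.ofBijective_apply, isUpDownPerm_iff_isCUD_foata_and_even_cycLen (even_two_mul m),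
    lrmCount_eq_cycleCount_foata, and_assoc]
end

section
/- For all n ≥ 0 and all a, b ≥ 0, the number of up-down permutations π of [n+1] with lrm(π) = a + 1 and st(π) = b + 1 equals the number of cycle-up-down permutations σ of [n] with exactly a cycles of even length and exactly b cycles of odd length. -/
open Equiv Finset

/-!
Write an up-down permutation as `π = L 1 Q`. Its left-to-right minima are those of `L` and `1`, and
its min-max sequence is `1` followed by the max-min sequence of `Q`, so the joint generating
function of `(lrm, st)` over `[n + 1]` is, up to the factor `x y`, a product `A B` of exponential
generating functions. Let `E` be the generating function of the zigzag numbers, with even and odd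
parts `E₀` and `E₁`. Cutting `L`, which has even length, at its smallest entry gives
`A' = x E₁ A`; cutting `Q` at its largest entry, then the rest at its smallest one, and so on,
gives `B' = y E₀ B`. Hence `(A B)' = (x E₁ + y E₀) A B`. Removing the cycle of the smallest element
shows that the generating function of `(c_e, c_o)` over cycle-up-down permutations satisfies the
same differential equation.
-/

namespace UpDownCycle

section BinomialConvolution

variable {R : Type*} [CommSemiring R]

/-- Binomial convolution, i.e. the product of the exponential generating functions
of `f` and `g`. -/
def binomConv (f g : ℕ → R) (n : ℕ) : R :=
  ∑ p ∈ antidiagonal n, (n.choose p.1 : R) * (f p.1 * g p.2)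

theorem binomConv_zero (f g : ℕ → R) : binomConv f g 0 = f 0 * g 0 := by
  simp [binomConv]

-- The product rule for exponential generating functions, whose derivative is the index shift.
theorem binomConv_succ (f g : ℕ → R) (n : ℕ) :
    binomConv f g (n + 1) =
      binomConv (fun k => f (k + 1)) g n + binomConv f (fun k => g (k + 1)) n := by
  rw [binomConv, sum_antidiagonal_choose_succ_mul (fun i j => f i * g j), add_comm]
  congr 1
  refine sum_congr rfl fun p hp => ?_
  rw [← Nat.choose_symm_of_eq_add (mem_antidiagonal.1 hp).symm]

theorem binomConv_congr_right {f g g' : ℕ → R} {n : ℕ} (h : ∀ k ≤ n, g k = g' k) :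
    binomConv f g n = binomConv f g' n :=
  sum_congr rfl fun p hp => by rw [h p.2 (HasAntidiagonal.antidiagonal.snd_le hp)]

theorem binomConv_comm (f g : ℕ → R) : binomConv f g = binomConv g f := by
  funext n
  induction n generalizing f g with
  | zero => rw [binomConv_zero, binomConv_zero, mul_comm]
  | succ n ih => rw [binomConv_succ, binomConv_succ, ih, ih f, add_comm]

theorem binomConv_add_left (f f' g : ℕ → R) :
    binomConv (f + f') g = binomConv f g + binomConv f' g := by
  funext n
  simp only [binomConv, Pi.add_apply, add_mul, mul_add, sum_add_distrib]

theorem binomConv_add_right (f g g' : ℕ → R) :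
    binomConv f (g + g') = binomConv f g + binomConv f g' := by
  simp only [binomConv_comm f, binomConv_add_left]

theorem binomConv_assoc (f g h : ℕ → R) :
    binomConv (binomConv f g) h = binomConv f (binomConv g h) := by
  funext n
  induction n generalizing f g h with
  | zero => simp only [binomConv_zero, mul_assoc]
  | succ n ih =>
    have shift (u v : ℕ → R) : (fun k => binomConv u v (k + 1)) =
        binomConv (fun k => u (k + 1)) v + binomConv u (fun k => v (k + 1)) :=
      funext (binomConv_succ u v)
    rw [binomConv_succ, binomConv_succ, shift f g, shift g h, binomConv_add_left,
      binomConv_add_right, Pi.add_apply, Pi.add_apply, ih, ih, ih, add_assoc]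

theorem sum_powerset_mul_eq_binomConv {α : Type*} [DecidableEq α] (S : Finset α) (f g : ℕ → R) :
    ∑ T ∈ S.powerset, f #T * g #(S \ T) = binomConv f g #S := by
  calc ∑ T ∈ S.powerset, f #T * g #(S \ T)
      = ∑ T ∈ S.powerset, f #T * g (#S - #T) :=
        sum_congr rfl fun T hT => by rw [card_sdiff_of_subset (mem_powerset.1 hT)]
    _ = ∑ k ∈ range (#S + 1), (#S).choose k • (f k * g (#S - k)) :=
        sum_powerset_apply_card fun k => f k * g (#S - k)
    _ = binomConv f g #S := by
        simp only [binomConv, nsmul_eq_mul, Nat.sum_antidiagonal_eq_sum_range_succ_mk]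

/-- The solution `F` of the differential equation `F' = g F`, `F(0) = 1` between exponential
generating functions, i.e. `exp (∫ g)`. -/
def binomExp (g : ℕ → R) : ℕ → R
  | 0 => 1
  | n + 1 => ∑ k : Fin (n + 1), (n.choose k : R) * (binomExp g k * g (n - k))

theorem binomExp_zero (g : ℕ → R) : binomExp g 0 = 1 := by
  rw [binomExp]

theorem binomExp_succ (g : ℕ → R) (n : ℕ) : binomExp g (n + 1) = binomConv g (binomExp g) n := by
  rw [binomExp, binomConv_comm, binomConv, Nat.sum_antidiagonal_eq_sum_range_succ_mk,
    Fin.sum_univ_eq_sum_range fun k => (n.choose k : R) * (binomExp g k * g (n - k))]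

theorem eq_binomExp_of_succ {g F : ℕ → R} (zero : F 0 = 1)
    (succ : ∀ n, F (n + 1) = binomConv g F n) : F = binomExp g := by
  funext n
  induction n using Nat.strong_induction_on with
  | _ n ih =>
    cases n with
    | zero => rw [zero, binomExp_zero]
    | succ n =>
      rw [succ, binomExp_succ]
      exact binomConv_congr_right fun k hk => ih k (by lia)

theorem binomConv_binomExp (g h : ℕ → R) :
    binomConv (binomExp g) (binomExp h) = binomExp (g + h) := by
  refine eq_binomExp_of_succ ?_ fun n => ?_
  · rw [binomConv_zero, binomExp_zero, binomExp_zero, one_mul]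
  · have shift (u : ℕ → R) : (fun k => binomExp u (k + 1)) = binomConv u (binomExp u) :=
      funext (binomExp_succ u)
    rw [binomConv_succ, shift, shift, binomConv_add_left, Pi.add_apply, binomConv_assoc,
      ← binomConv_assoc (binomExp g), binomConv_comm (binomExp g) h, binomConv_assoc]

end BinomialConvolution

section Direction

variable {α : Type*} [LinearOrder α]

/-- `x < y` in the direction `d`: the order itself for `true` and the reverse order for `false`.
Directions let minima and maxima, ascents and descents be treated at once. -/
def Precedes : Bool → α → α → Prop
  | true, x, y => x < y
  | false, x, y => y < x

theorem precedes_not {d : Bool} {x y : α} : Precedes (!d) x y ↔ Precedes d y x := by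
  cases d <;> rfl

theorem Precedes.asymm {d : Bool} {x y : α} (h : Precedes d x y) : ¬ Precedes d y x := by
  cases d <;> exact lt_asymm h

theorem Precedes.ne {d : Bool} {x y : α} (h : Precedes d x y) : x ≠ y := by
  rintro rfl
  exact h.asymm h

theorem exists_insert_precedes (d : Bool) {S : Finset α} (hS : S.Nonempty) :
    ∃ m S', S = insert m S' ∧ ∀ x ∈ S', Precedes d m x := by
  cases d with
  | true =>
    exact ⟨S.min' hS, S.erase (S.min' hS), (insert_erase (S.min'_mem hS)).symm,
      fun _ => S.min'_lt_of_mem_erase_min' hS⟩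
  | false =>
    exact ⟨S.max' hS, S.erase (S.max' hS), (insert_erase (S.max'_mem hS)).symm,
      fun _ => S.lt_max'_of_mem_erase_max' hS⟩

theorem notMem_of_precedes {d : Bool} {m : α} {S : Finset α} (hS : ∀ x ∈ S, Precedes d m x) :
    m ∉ S :=
  fun hm => (hS m hm).ne rfl

theorem eq_binomExp_card {R ι : Type*} [CommSemiring R] {g : ℕ → R} {Φ : ι → Finset α → R}
    (dir : ι → Bool) (next : ι → ι) (empty : ∀ i, Φ i ∅ = 1)
    (insert : ∀ i m S, (∀ x ∈ S, Precedes (dir i) m x) →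
      Φ i (insert m S) = ∑ T ∈ S.powerset, g #T * Φ (next i) (S \ T))
    (i : ι) (S : Finset α) : Φ i S = binomExp g #S := by
  induction hn : #S using Nat.strong_induction_on generalizing i S with
  | _ n ih =>
    rcases S.eq_empty_or_nonempty with rfl | hS
    · rw [empty, ← hn, card_empty, binomExp_zero]
    · obtain ⟨m, S, rfl, hm⟩ := exists_insert_precedes (dir i) hS
      rw [card_insert_of_notMem (notMem_of_precedes hm)] at hn
      rw [insert i m S hm, ← hn, binomExp_succ, ← sum_powerset_mul_eq_binomConv]
      refine sum_congr rfl fun T _ => ?_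
      have : #(S \ T) ≤ #S := card_le_card sdiff_subset
      rw [ih #(S \ T) (by lia) _ _ rfl]

end Direction

section AlternatingLists

variable {α : Type*} [LinearOrder α] {d : Bool} {m : α} {Q : List α}

/-- Lists that go strictly up and down alternately, the first step being an ascent when the
direction is `true` and a descent when it is `false`. -/
def IsAlternating : Bool → List α → Prop
  | _, [] => True
  | _, [_] => True
  | d, x :: y :: l => Precedes d x y ∧ IsAlternating (!d) (y :: l)

theorem isAlternating_cons_iff (hQ : ∀ x ∈ Q, Precedes d m x) :
    IsAlternating d (m :: Q) ↔ IsAlternating (!d) Q := by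
  cases Q with
  | nil => simp only [IsAlternating]
  | cons y l => simp only [IsAlternating, hQ y List.mem_cons_self, true_and]

-- A minimum can only sit in a valley and a maximum on a peak: this fixes the parity of its index.
theorem isAlternating_append_cons_iff (hQ : ∀ x ∈ Q, Precedes d m x) :
    ∀ {L : List α}, (∀ x ∈ L, Precedes d m x) →
      (IsAlternating d (L ++ m :: Q) ↔
        Even L.length ∧ IsAlternating d L ∧ IsAlternating (!d) Q)
  | [], _ => by simp [IsAlternating, isAlternating_cons_iff hQ]
  | [x], hL => by simp [IsAlternating, (hL x (by simp)).asymm]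
  | [x, y], hL => by
    have hy : Precedes (!d) y m := precedes_not.2 (hL y (by simp))
    simp [IsAlternating, isAlternating_cons_iff hQ, hy]
  | x :: y :: z :: l, hL => by
    have ih := isAlternating_append_cons_iff hQ (L := z :: l)
      (fun w hw => hL w (List.mem_cons_of_mem x (List.mem_cons_of_mem y hw)))
    have parity : Even (x :: y :: z :: l).length ↔ Even (z :: l).length := by
      simp [Nat.even_add_one]
    simp only [List.cons_append, IsAlternating, Bool.not_not] at ih ⊢
    rw [ih, parity]
    tauto

theorem isAlternating_iff_getElem : ∀ {d : Bool} {l : List α},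
    IsAlternating d l ↔ ∀ i (h : i + 1 < l.length),
      (i % 2 = 0 → Precedes d l[i] l[i + 1]) ∧ (i % 2 = 1 → Precedes d l[i + 1] l[i])
  | _, [] => by simp [IsAlternating]
  | _, [x] => by simp [IsAlternating]
  | d, x :: y :: l => by
    have parity (i : ℕ) : (i + 1) % 2 = 0 ↔ i % 2 = 1 := by lia
    have parity' (i : ℕ) : (i + 1) % 2 = 1 ↔ i % 2 = 0 := by lia
    rw [IsAlternating, isAlternating_iff_getElem (l := y :: l)]
    refine Iff.trans (and_congr (by simp) (forall_congr' fun i => ?_)) Nat.and_forall_add_one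
    simp only [parity, parity', precedes_not, List.getElem_cons_succ, List.length_cons,
      Nat.add_lt_add_iff_right]
    exact forall_congr' fun _ => and_comm

end AlternatingLists

section Orderings

variable {α : Type*} {S T : Finset α} {l : List α}

/-- The lists that contain every element of `S` exactly once and nothing else. -/
def orderings (S : Finset α) : Finset (List α) :=
  ⟨S.val.lists, Multiset.lists_nodup_finset S⟩

theorem mem_orderings : l ∈ orderings S ↔ (l : Multiset α) = S.val :=
  (Multiset.mem_lists_iff _ _).trans eq_comm

theorem length_of_mem_orderings (hl : l ∈ orderings S) : l.length = #S := by
  rw [← Multiset.coe_card, mem_orderings.1 hl, card_def]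

theorem mem_iff_of_mem_orderings (hl : l ∈ orderings S) {x : α} : x ∈ l ↔ x ∈ S := by
  rw [← Multiset.mem_coe, mem_orderings.1 hl, mem_val]

theorem nodup_of_mem_orderings (hl : l ∈ orderings S) : l.Nodup := by
  rw [← Multiset.coe_nodup, mem_orderings.1 hl]
  exact S.nodup

theorem nodup_cons_of_mem_orderings {m : α} (hm : m ∉ S) (hl : l ∈ orderings S) :
    (m :: l).Nodup :=
  List.nodup_cons.2 ⟨mt (mem_iff_of_mem_orderings hl).1 hm, nodup_of_mem_orderings hl⟩

theorem orderings_empty : orderings (∅ : Finset α) = {[]} := by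
  ext l
  simp [mem_orderings]

variable [DecidableEq α]

theorem toFinset_of_mem_orderings (hl : l ∈ orderings S) : l.toFinset = S := by
  ext x
  rw [List.mem_toFinset, mem_iff_of_mem_orderings hl]

theorem mem_orderings_toFinset (hl : l.Nodup) : l ∈ orderings l.toFinset := by
  rw [mem_orderings, List.toFinset_val, hl.dedup]

theorem append_cons_mem_orderings_insert {m : α} (hm : m ∉ S) {L Q : List α} :
    L ++ m :: Q ∈ orderings (insert m S) ↔
      L.toFinset ⊆ S ∧ L.Nodup ∧ Q ∈ orderings (S \ L.toFinset) := by
  rw [mem_orderings, mem_orderings, insert_val_of_notMem hm, ← Multiset.coe_add,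
    ← Multiset.cons_coe, Multiset.add_cons, Multiset.cons_inj_right, sdiff_val]
  constructor
  · intro h
    have hL : L.Nodup :=
      Multiset.coe_nodup.1 (Multiset.nodup_of_le (h ▸ Multiset.le_add_right _ _) S.nodup)
    rw [← val_le_iff, List.toFinset_val, hL.dedup, ← h]
    exact ⟨Multiset.le_add_right _ _, hL, (add_tsub_cancel_left _ _).symm⟩
  · rintro ⟨hLS, hL, hQ⟩
    rw [← val_le_iff, List.toFinset_val, hL.dedup] at hLS
    rw [hQ, List.toFinset_val, hL.dedup, add_tsub_cancel_of_le hLS]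

theorem sum_orderings_insert {M : Type*} [AddCommMonoid M] {m : α} (hm : m ∉ S)
    (φ : List α → M) :
    ∑ l ∈ orderings (insert m S), φ l =
      ∑ T ∈ S.powerset, ∑ L ∈ orderings T, ∑ Q ∈ orderings (S \ T), φ (L ++ m :: Q) := by
  simp only [sum_sigma']
  refine (sum_bij (fun p _ => p.2.1 ++ m :: p.2.2) ?_ ?_ ?_ fun _ _ => rfl).symm
  · rintro ⟨T, L, Q⟩ h
    simp only [mem_sigma, mem_powerset] at h
    obtain ⟨hT, hL, hQ⟩ := h
    rw [append_cons_mem_orderings_insert hm, toFinset_of_mem_orderings hL]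
    exact ⟨hT, nodup_of_mem_orderings hL, hQ⟩
  · rintro ⟨T, L, Q⟩ h ⟨T', L', Q'⟩ h' e
    simp only [mem_sigma, mem_powerset] at h h' e
    obtain ⟨hT, hL, hQ⟩ := h
    obtain ⟨-, hL', -⟩ := h'
    have hmL : m ∉ L := fun h => hm (hT ((mem_iff_of_mem_orderings hL).1 h))
    have hmQ : m ∉ Q := fun h => hm (mem_sdiff.1 ((mem_iff_of_mem_orderings hQ).1 h)).1
    obtain ⟨rfl, -, rfl⟩ := (List.append_cons_inj_of_notMem hmL hmQ).1 e
    rw [← toFinset_of_mem_orderings hL, ← toFinset_of_mem_orderings hL']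
  · intro l hl
    have hml : m ∈ l := (mem_iff_of_mem_orderings hl).2 (mem_insert_self m S)
    obtain ⟨L, Q, rfl⟩ := List.append_of_mem hml
    obtain ⟨hLS, hL, hQ⟩ := (append_cons_mem_orderings_insert hm).1 hl
    refine ⟨⟨L.toFinset, L, Q⟩, ?_, rfl⟩
    simp only [mem_sigma, mem_powerset]
    exact ⟨hLS, mem_orderings_toFinset hL, hQ⟩

end Orderings

section LeftToRightMinima

variable {α : Type*} [LinearOrder α]

/-- The number of left-to-right minima of the second list among those smaller than every entry of
the first one, which collects the entries already read. -/
def lrmBelow : List α → List α → ℕ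
  | _, [] => 0
  | P, a :: l => (if ∀ p ∈ P, a < p then 1 else 0) + lrmBelow (a :: P) l

theorem lrmBelow_append (P L Q : List α) :
    lrmBelow P (L ++ Q) = lrmBelow P L + lrmBelow (L.reverse ++ P) Q := by
  induction L generalizing P with
  | nil => simp [lrmBelow]
  | cons a L ih => simp [lrmBelow, ih, add_assoc]

theorem lrmBelow_eq_zero {m : α} {P Q : List α} (hP : m ∈ P) (hQ : ∀ x ∈ Q, m < x) :
    lrmBelow P Q = 0 := by
  induction Q generalizing P with
  | nil => rfl
  | cons a Q ih =>
    have ha : ¬ ∀ p ∈ P, a < p := fun h => lt_asymm (h m hP) (hQ a List.mem_cons_self)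
    rw [lrmBelow, if_neg ha, ih (List.mem_cons_of_mem a hP) fun x hx =>
      hQ x (List.mem_cons_of_mem a hx)]

/-- The number of left-to-right minima of a list. -/
def lrm (l : List α) : ℕ := lrmBelow [] l

theorem lrm_append_cons {m : α} {L Q : List α} (hL : ∀ x ∈ L, m < x) (hQ : ∀ x ∈ Q, m < x) :
    lrm (L ++ m :: Q) = lrm L + 1 := by
  rw [lrm, lrm, lrmBelow_append, lrmBelow, lrmBelow_eq_zero List.mem_cons_self hQ,
    if_pos (by simpa using hL)]

theorem lrmBelow_ofFn {k : ℕ} (P : List α) (f : Fin k → α) :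
    lrmBelow P (List.ofFn f) = #{i | (∀ p ∈ P, f i < p) ∧ ∀ j < i, f i < f j} := by
  induction k generalizing P with
  | zero => simp [lrmBelow]
  | succ k ih =>
    rw [List.ofFn_succ, lrmBelow, ih, card_filter, card_filter, Fin.sum_univ_succ]
    simp [Fin.forall_fin_succ, and_assoc, and_left_comm]

theorem lrmCount_eq_lrm {n : ℕ} (π : Perm (Fin n)) : lrmCount π = lrm (oneLine π) := by
  rw [lrm, oneLine, lrmBelow_ofFn, lrmCount, Nat.card_eq_fintype_card, Fintype.card_subtype]
  simp

end LeftToRightMinima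

section MinMaxSequence

theorem isLeast_foldr_min {α : Type*} [LinearOrder α] (a : α) (l : List α) :
    IsLeast {x | x ∈ a :: l} (l.foldr min a) := by
  induction l with
  | nil => simp [IsLeast, lowerBounds]
  | cons b l ih =>
    have swap : {x | x ∈ a :: b :: l} = insert b {x | x ∈ a :: l} := by
      ext x
      simp [or_left_comm]
    exact swap ▸ ih.insert b

theorem isGreatest_foldr_max {α : Type*} [LinearOrder α] (a : α) (l : List α) :
    IsGreatest {x | x ∈ a :: l} (l.foldr max a) :=
  isLeast_foldr_min (α := αᵒᵈ) a l

theorem foldr_extremum_eq {α : Type*} [LinearOrder α] {d : Bool} {a m : α} {l : List α}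
    (ha : a ∈ l) (hm : m ∈ l) (h : ∀ x ∈ l, x = m ∨ Precedes d m x) :
    (if d then l.foldr min a else l.foldr max a) = m := by
  have ha' : ∀ x, x ∈ a :: l ↔ x ∈ l := by simp [ha]
  cases d with
  | true =>
    refine (isLeast_foldr_min a l).unique ⟨(ha' m).2 hm, fun x hx => ?_⟩
    exact (h x ((ha' x).1 hx)).elim (fun e => e.ge) le_of_lt
  | false =>
    refine (isGreatest_foldr_max a l).unique ⟨(ha' m).2 hm, fun x hx => ?_⟩
    exact (h x ((ha' x).1 hx)).elim (fun e => e.le) le_of_lt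

theorem msLenAux_eq_msLen {fuel : ℕ} {s : ℕ → Bool} {l : List ℕ} (h : l.length ≤ fuel) :
    msLenAux fuel s l = msLen s l := by
  rw [msLen]
  induction hl : l.length using Nat.strong_induction_on generalizing fuel s l with
  | _ k ih =>
    subst hl
    match fuel, l with
    | 0, [] => rfl
    | fuel + 1, [] => rfl
    | fuel + 1, a :: t =>
      simp only [List.length_cons, msLenAux]
      set v := if s 0 = true then List.foldr min a (a :: t) else List.foldr max a (a :: t)
      have hrest : ((a :: t).dropWhile (· != v)).tail.length ≤ t.length := by
        have := (List.dropWhile_suffix (· != v) (l := a :: t)).length_le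
        rw [List.length_cons] at this
        rw [List.length_tail]
        lia
      have hfuel : t.length ≤ fuel := Nat.le_of_succ_le_succ h
      rw [ih _ (Nat.lt_succ_of_le hrest) (hrest.trans hfuel) rfl,
        ih _ (Nat.lt_succ_of_le hrest) hrest rfl]

/-- The length of the sequence of alternate extrema (each taken to the right of the previous one)
that starts with the minimum when the direction is `true`, with the maximum when it is `false`. -/
def minMaxLen (d : Bool) (l : List ℕ) : ℕ := msLen (fun i => (i % 2 == 0) == d) l

theorem stStat_eq_minMaxLen {n : ℕ} (π : Perm (Fin n)) :
    stStat π = minMaxLen true (oneLine π) := by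
  simp [stStat, msStat, minMaxLen]

theorem minMaxLen_nil (d : Bool) : minMaxLen d [] = 0 := rfl

theorem minMaxLen_append_cons {d : Bool} {m : ℕ} {L Q : List ℕ}
    (hL : ∀ x ∈ L, Precedes d m x) (hQ : ∀ x ∈ Q, Precedes d m x) :
    minMaxLen d (L ++ m :: Q) = minMaxLen (!d) Q + 1 := by
  have hm : m ∈ L ++ m :: Q := List.mem_append_right L List.mem_cons_self
  have hl : ∀ x ∈ L ++ m :: Q, x = m ∨ Precedes d m x := fun x hx => by
    rcases List.mem_append.1 hx with hx | hx
    · exact .inr (hL x hx)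
    · exact (List.mem_cons.1 hx).imp_right (hQ x)
  have hrest : ((L ++ m :: Q).dropWhile (· != m)).tail = Q := by
    rw [List.dropWhile_append_of_pos fun x hx => bne_iff_ne.2 (hL x hx).ne.symm]
    simp
  have hlen : Q.length + 1 ≤ (L ++ m :: Q).length := by simp
  have shift : (fun i => ((i + 1) % 2 == 0) == d) = fun i => (i % 2 == 0) == !d := by
    funext i
    rcases Nat.mod_two_eq_zero_or_one i with h | h <;> cases d <;> simp [Nat.add_mod, h]
  obtain ⟨a, t, hat⟩ := List.exists_cons_of_ne_nil (List.ne_nil_of_mem hm)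
  rw [minMaxLen, minMaxLen, msLen]
  rw [hat] at hm hl hrest hlen ⊢
  have hv := foldr_extremum_eq List.mem_cons_self hm hl
  simp only [List.length_cons, msLenAux, Nat.zero_mod, beq_self_eq_true, Bool.true_beq]
  rw [hv, hrest, shift, msLenAux_eq_msLen (Nat.le_of_succ_le_succ hlen), add_comm]

end MinMaxSequence

section AlternatingOrderings

variable {α : Type*} [LinearOrder α] {d : Bool} {m : α} {S : Finset α} {l : List α}

open scoped Classical in
/-- The orderings of `S` that alternate, the first step going in direction `d`. -/
noncomputable def alternatingOrderings (d : Bool) (S : Finset α) : Finset (List α) :=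
  {l ∈ orderings S | IsAlternating d l}

theorem mem_alternatingOrderings :
    l ∈ alternatingOrderings d S ↔ l ∈ orderings S ∧ IsAlternating d l := by
  classical
  rw [alternatingOrderings, mem_filter]

theorem alternatingOrderings_empty : alternatingOrderings d (∅ : Finset α) = {[]} := by
  ext l
  rw [mem_alternatingOrderings, orderings_empty, mem_singleton]
  exact and_iff_left_of_imp fun h => h ▸ trivial

theorem sum_alternatingOrderings_insert {R : Type*} [CommSemiring R] {φ f g : List α → R}
    (hS : ∀ x ∈ S, Precedes d m x)
    (hφ : ∀ L Q : List α, (∀ x ∈ L, Precedes d m x) → (∀ x ∈ Q, Precedes d m x) →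
      φ (L ++ m :: Q) = f L * g Q) :
    ∑ l ∈ alternatingOrderings d (insert m S), φ l =
      ∑ T ∈ S.powerset, (if Even #T then ∑ L ∈ alternatingOrderings d T, f L else 0) *
        ∑ Q ∈ alternatingOrderings (!d) (S \ T), g Q := by
  classical
  simp only [alternatingOrderings, sum_filter]
  rw [sum_orderings_insert (notMem_of_precedes hS)]
  refine sum_congr rfl fun T hT => ?_
  rw [ite_sum_zero, sum_mul_sum]
  refine sum_congr rfl fun L hL => sum_congr rfl fun Q hQ => ?_
  have hmL : ∀ x ∈ L, Precedes d m x := fun x hx =>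
    hS x (mem_powerset.1 hT ((mem_iff_of_mem_orderings hL).1 hx))
  have hmQ : ∀ x ∈ Q, Precedes d m x := fun x hx =>
    hS x (sdiff_subset ((mem_iff_of_mem_orderings hQ).1 hx))
  simp only [isAlternating_append_cons_iff hmQ hmL, length_of_mem_orderings hL, hφ L Q hmL hmQ,
    ← ite_and, ite_zero_mul_ite_zero, and_assoc]

/-- The Euler zigzag numbers, by the recurrence on the number `k` of entries to the left of the
extreme one in an alternating list. -/
def zigzag : ℕ → ℕ
  | 0 => 1
  | n + 1 => ∑ k : Fin (n + 1), n.choose k * ((if Even k.val then zigzag k else 0) * zigzag (n - k))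

theorem zigzag_succ (n : ℕ) :
    zigzag (n + 1) = binomConv (fun k => if Even k then zigzag k else 0) zigzag n := by
  rw [zigzag, binomConv, Nat.sum_antidiagonal_eq_sum_range_succ_mk,
    Fin.sum_univ_eq_sum_range fun k =>
      n.choose k * ((if Even k then zigzag k else 0) * zigzag (n - k))]
  rfl

theorem card_alternatingOrderings (d : Bool) (S : Finset α) :
    #(alternatingOrderings d S) = zigzag #S := by
  induction hn : #S using Nat.strong_induction_on generalizing d S with
  | _ n ih =>
    rcases S.eq_empty_or_nonempty with rfl | hS
    · rw [alternatingOrderings_empty, card_singleton, ← hn, card_empty, zigzag]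
    · obtain ⟨m, S, rfl, hm⟩ := exists_insert_precedes d hS
      rw [card_insert_of_notMem (notMem_of_precedes hm)] at hn
      rw [card_eq_sum_ones, ← hn, zigzag_succ, ← sum_powerset_mul_eq_binomConv,
        sum_alternatingOrderings_insert hm fun L Q _ _ => (one_mul 1).symm]
      refine sum_congr rfl fun T hT => ?_
      have hT : #T ≤ #S := card_le_card (mem_powerset.1 hT)
      have hST : #(S \ T) ≤ #S := card_le_card sdiff_subset
      rw [← card_eq_sum_ones, ← card_eq_sum_ones, ih #T (by lia) _ _ rfl,
        ih #(S \ T) (by lia) _ _ rfl]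

end AlternatingOrderings

section AlternatingStatistics

variable {R : Type*} [CommSemiring R]

theorem sum_pow_minMaxLen (y : R) (d : Bool) (S : Finset ℕ) :
    ∑ l ∈ alternatingOrderings d S, y ^ minMaxLen d l =
      binomExp (fun k => if Even k then y * zigzag k else 0) #S := by
  refine eq_binomExp_card (Φ := fun d S => ∑ l ∈ alternatingOrderings d S, y ^ minMaxLen d l)
    id not (fun d => ?_) (fun d m S (hS : ∀ x ∈ S, Precedes d m x) => ?_) d S
  · rw [alternatingOrderings_empty, sum_singleton, minMaxLen_nil, pow_zero]
  · rw [sum_alternatingOrderings_insert (f := fun _ => y)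
      (g := fun Q => y ^ minMaxLen (!d) Q) hS fun L Q hL hQ => by
        rw [minMaxLen_append_cons hL hQ, pow_succ']]
    simp only [sum_const, nsmul_eq_mul, card_alternatingOrderings, mul_comm y]

theorem sum_powerset_sdiff {α M : Type*} [DecidableEq α] [AddCommMonoid M] (S : Finset α)
    (f : Finset α → Finset α → M) :
    ∑ T ∈ S.powerset, f T (S \ T) = ∑ T ∈ S.powerset, f (S \ T) T := by
  refine sum_nbij' (S \ ·) (S \ ·) ?_ ?_ ?_ ?_ ?_ <;> simp +contextual

theorem sum_pow_lrm_of_even (x : R) {α : Type*} [LinearOrder α] (S : Finset α) :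
    (if Even #S then ∑ l ∈ alternatingOrderings true S, x ^ lrm l else 0) =
      binomExp (fun k => if Odd k then x * zigzag k else 0) #S := by
  refine eq_binomExp_card (ι := Unit)
    (Φ := fun _ S => if Even #S then ∑ l ∈ alternatingOrderings true S, x ^ lrm l else 0)
    (fun _ => true) id (fun _ => ?_) (fun _ m S hS => ?_) () S
  · rw [if_pos (by simp), alternatingOrderings_empty, sum_singleton, lrm, lrmBelow, pow_zero]
  · rw [card_insert_of_notMem (notMem_of_precedes hS), sum_alternatingOrderings_insert
      (f := fun L => x ^ lrm L) (g := fun _ => x) hS fun L Q hL hQ => by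
        rw [lrm_append_cons hL hQ, pow_succ], ite_sum_zero,
      sum_powerset_sdiff S fun T U => (if Odd #T then x * (zigzag #T : R) else 0) *
        if Even #U then ∑ l ∈ alternatingOrderings true U, x ^ lrm l else 0]
    refine sum_congr rfl fun T hT => ?_
    have hcard : #(S \ T) + #T = #S := card_sdiff_add_card_eq_card (mem_powerset.1 hT)
    rw [← hcard]
    simp only [sum_const, nsmul_eq_mul, card_alternatingOrderings]
    by_cases hT : Even #T <;> by_cases hST : Even #(S \ T) <;>
      simp [hT, hST, Nat.even_add_one, Nat.even_add, ← Nat.not_even_iff_odd, mul_comm]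

theorem sum_pow_lrm_mul_pow_minMaxLen (x y : R) {S : Finset ℕ} {n : ℕ} (hn : #S = n + 1) :
    ∑ l ∈ alternatingOrderings true S, x ^ lrm l * y ^ minMaxLen true l =
      x * y * binomExp (fun k => (if Even (k + 1) then x else y) * zigzag k) n := by
  have hne : S.Nonempty := card_pos.1 (by lia)
  obtain ⟨m, S, rfl, hm⟩ := exists_insert_precedes true hne
  rw [card_insert_of_notMem (notMem_of_precedes hm), Nat.add_right_cancel_iff] at hn
  have hg : (fun k => (if Even (k + 1) then x else y) * (zigzag k : R)) =
      (fun k => if Odd k then x * (zigzag k : R) else 0) +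
        fun k => if Even k then y * (zigzag k : R) else 0 := by
    funext k
    by_cases hk : Even k <;> simp [hk, Nat.even_add_one, ← Nat.not_even_iff_odd]
  rw [sum_alternatingOrderings_insert (f := fun L => x ^ lrm L)
      (g := fun Q => x * y * y ^ minMaxLen false Q) hm fun L Q hL hQ => by
        rw [lrm_append_cons hL hQ, minMaxLen_append_cons hL hQ, Bool.not_true]; ring,
    hg, ← hn, ← binomConv_binomExp,
    ← sum_powerset_mul_eq_binomConv, mul_sum]
  refine sum_congr rfl fun T _ => ?_
  rw [← mul_sum, Bool.not_true, sum_pow_lrm_of_even, sum_pow_minMaxLen, mul_left_comm]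

end AlternatingStatistics

section OneLine

variable {n : ℕ}

theorem isUpDownPerm_iff_isAlternating (π : Perm (Fin n)) :
    IsUpDownPerm π ↔ IsAlternating true (oneLine π) := by
  simp only [IsUpDownPerm, isAlternating_iff_getElem, oneLine, List.getElem_ofFn, Precedes,
    List.length_ofFn, Fin.lt_def]
  constructor
  · exact fun h i hi => h ⟨i, by lia⟩ ⟨i + 1, hi⟩ rfl
  · rintro h i ⟨_, hj⟩ rfl
    exact h i hj

theorem oneLine_injective : Function.Injective (oneLine (n := n)) := fun _ _ h =>
  Equiv.ext fun i => Fin.val_injective (congrFun (List.ofFn_injective h) i)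

theorem oneLine_mem_orderings (π : Perm (Fin n)) : oneLine π ∈ orderings (range n) := by
  have hset : (oneLine π).toFinset = range n := by
    ext k
    simp only [oneLine, List.mem_toFinset, List.mem_ofFn, mem_range]
    exact ⟨fun ⟨i, hi⟩ => hi ▸ (π i).isLt, fun hk => ⟨π.symm ⟨k, hk⟩, by simp⟩⟩
  exact hset ▸ mem_orderings_toFinset
    (List.nodup_ofFn.2 (Fin.val_injective.comp π.injective))

theorem exists_oneLine_eq {l : List ℕ} (hl : l ∈ orderings (range n)) :
    ∃ π : Perm (Fin n), oneLine π = l := by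
  have hlen : l.length = n := by rw [length_of_mem_orderings hl, card_range]
  have hlt (i : Fin n) : l[i] < n :=
    mem_range.1 ((mem_iff_of_mem_orderings hl).1 (List.getElem_mem _))
  have hinj : Function.Injective fun i : Fin n => (⟨l[i], hlt i⟩ : Fin n) := fun i j h =>
    Fin.ext (((nodup_of_mem_orderings hl).getElem_inj_iff).1 (Fin.ext_iff.1 h))
  refine ⟨Equiv.ofBijective _ (Finite.injective_iff_bijective.1 hinj), ?_⟩
  refine List.ext_getElem (by simp [oneLine, hlen]) fun i _ _ => ?_
  simp [oneLine]

open scoped Classical in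
theorem sum_isUpDownPerm {M : Type*} [AddCommMonoid M] (φ : List ℕ → M) :
    ∑ π : Perm (Fin n) with IsUpDownPerm π, φ (oneLine π) =
      ∑ l ∈ alternatingOrderings true (range n), φ l := by
  refine sum_bij (fun π _ => oneLine π) (fun π hπ => ?_)
    (fun _ _ _ _ h => oneLine_injective h) (fun l hl => ?_) fun _ _ => rfl
  · rw [mem_filter, isUpDownPerm_iff_isAlternating] at hπ
    exact mem_alternatingOrderings.2 ⟨oneLine_mem_orderings π, hπ.2⟩
  · obtain ⟨hl, halt⟩ := mem_alternatingOrderings.1 hl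
    obtain ⟨π, rfl⟩ := exists_oneLine_eq hl
    exact ⟨π, mem_filter.2 ⟨mem_univ π, (isUpDownPerm_iff_isAlternating π).2 halt⟩, rfl⟩

open scoped Classical in
theorem sum_isUpDownPerm_pow {R : Type*} [CommSemiring R] (n : ℕ) (x y : R) :
    ∑ π : Perm (Fin (n + 1)) with IsUpDownPerm π, x ^ lrmCount π * y ^ stStat π =
      x * y * binomExp (fun k => (if Even (k + 1) then x else y) * zigzag k) n := by
  simp only [lrmCount_eq_lrm, stStat_eq_minMaxLen]
  rw [sum_isUpDownPerm fun l => x ^ lrm l * y ^ minMaxLen true l,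
    sum_pow_lrm_mul_pow_minMaxLen x y (card_range (n + 1))]

end OneLine

section PermsOn

variable {α : Type*} [DecidableEq α] {S T : Finset α} {m : α} {l : List α} {σ τ : Perm α}

theorem disjoint_formPerm (h : ∀ x ∈ l, τ x = x) : Perm.Disjoint l.formPerm τ := fun x =>
  (em (x ∈ l)).elim (fun hx => .inr (h x hx)) fun hx => .inl (List.formPerm_apply_of_notMem hx)

theorem isCycleOn_formPerm_toFinset (hl : l.Nodup) : l.formPerm.IsCycleOn l.toFinset := by
  simpa using hl.isCycleOn_formPerm

theorem formPerm_cons_pow_apply (hl : (m :: l).Nodup) (k : ℕ) :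
    ((m :: l).formPerm ^ k) m = (m :: l)[k % (m :: l).length]'(Nat.mod_lt _ (by simp)) :=
  (List.formPerm_pow_apply_getElem (m :: l) hl k 0 (by simp)).trans (by simp only [Nat.zero_add])

variable [Fintype α]

theorem tail_toList_formPerm (hl : (m :: l).Nodup) : ((m :: l).formPerm.toList m).tail = l := by
  cases l with
  | nil => rw [Perm.toList_formPerm_singleton, List.tail_nil]
  | cons y l => exact congrArg List.tail (Perm.toList_formPerm_nontrivial _ (by simp) hl)

theorem tail_toList_of_apply_eq_self (hm : σ m = m) : (σ.toList m).tail = [] := by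
  rw [Perm.toList_eq_nil_iff.2 (Perm.notMem_support.2 hm), List.tail_nil]

theorem cons_tail_toList (hm : σ m ≠ m) : m :: (σ.toList m).tail = σ.toList m := by
  have hm := Perm.mem_support.2 hm
  have hne : σ.toList m ≠ [] := fun h => Perm.toList_eq_nil_iff.1 h hm
  conv_rhs => rw [← List.cons_head_tail hne, List.head_eq_getElem, Perm.toList_getElem_zero σ m hm]

-- A fixed point has an empty `toList`, but its cycle `[m]` still has the empty tail.
theorem formPerm_cons_tail_toList (σ : Perm α) (m : α) :
    (m :: (σ.toList m).tail).formPerm = σ.cycleOf m := by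
  by_cases hm : σ m = m
  · rw [tail_toList_of_apply_eq_self hm, List.formPerm_singleton, (Perm.cycleOf_eq_one_iff σ).2 hm]
  · rw [cons_tail_toList hm, Perm.formPerm_toList]

theorem mem_tail_toList {x : α} : x ∈ (σ.toList m).tail ↔ x ≠ m ∧ σ.SameCycle m x := by
  by_cases hm : σ m = m
  · rw [tail_toList_of_apply_eq_self hm]
    exact iff_of_false List.not_mem_nil fun h => h.1 (h.2.eq_of_left hm).symm
  · have hnodup : m ∉ (σ.toList m).tail :=
      (List.nodup_cons.1 ((cons_tail_toList hm).symm ▸ Perm.nodup_toList σ m)).1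
    have hmem : x ∈ σ.toList m ↔ σ.SameCycle m x :=
      Perm.mem_toList_iff.trans (and_iff_left (Perm.mem_support.2 hm))
    rw [← hmem, ← cons_tail_toList hm, List.mem_cons]
    have : x ∈ (σ.toList m).tail → x ≠ m := fun hx e => hnodup (e ▸ hx)
    tauto

/-- The permutations that fix every point outside `S`. -/
def permsOn (S : Finset α) : Finset (Perm α) := {σ | σ.support ⊆ S}

theorem mem_permsOn : σ ∈ permsOn S ↔ σ.support ⊆ S := by
  simp [permsOn]

theorem permsOn_empty : permsOn (∅ : Finset α) = {1} := by
  ext σ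
  rw [mem_permsOn, subset_empty, Perm.support_eq_empty_iff, mem_singleton]

theorem permsOn_univ : permsOn (univ : Finset α) = univ :=
  filter_true_of_mem fun _ _ => subset_univ _

theorem cycleOf_formPerm_mul (hl : (m :: l).Nodup) (hτ : ∀ x ∈ m :: l, τ x = x) :
    ((m :: l).formPerm * τ).cycleOf m = (m :: l).formPerm := by
  rw [Perm.cycleOf_mul_of_apply_right_eq_self (disjoint_formPerm hτ).commute _
    (hτ m List.mem_cons_self), ← formPerm_cons_tail_toList, tail_toList_formPerm hl]

theorem apply_eq_self_of_mem_permsOn_sdiff (hm : m ∉ S) (hl : l ∈ orderings T)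
    (hτ : τ ∈ permsOn (S \ T)) : ∀ x ∈ m :: l, τ x = x := by
  intro x hx
  by_contra hne
  obtain ⟨hxS, hxT⟩ := mem_sdiff.1 (mem_permsOn.1 hτ (Perm.mem_support.2 hne))
  rcases List.mem_cons.1 hx with rfl | hx
  · exact hm hxS
  · exact hxT ((mem_iff_of_mem_orderings hl).1 hx)

theorem formPerm_mul_mem_permsOn (hT : T ⊆ S) (hl : l ∈ orderings T) (hτ : τ ∈ permsOn (S \ T)) :
    (m :: l).formPerm * τ ∈ permsOn (insert m S) := by
  refine mem_permsOn.2 ((Perm.support_mul_le _ _).trans (union_subset ?_ ?_))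
  · refine (List.support_formPerm_le _).trans ?_
    rw [List.toFinset_cons, toFinset_of_mem_orderings hl]
    exact insert_subset_insert m hT
  · exact (mem_permsOn.1 hτ).trans (sdiff_subset.trans (subset_insert m S))

theorem toFinset_tail_toList_subset (hσ : σ ∈ permsOn (insert m S)) :
    (σ.toList m).tail.toFinset ⊆ S := by
  intro x hx
  obtain ⟨hxm, hcycle⟩ := mem_tail_toList.1 (List.mem_toFinset.1 hx)
  have hσx : σ x ≠ x := fun h => hxm (hcycle.eq_of_right h).symm
  exact mem_of_mem_insert_of_ne (mem_permsOn.1 hσ (Perm.mem_support.2 hσx)) hxm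

theorem inv_cycleOf_mul_mem_permsOn (hσ : σ ∈ permsOn (insert m S)) :
    (σ.cycleOf m)⁻¹ * σ ∈ permsOn (S \ (σ.toList m).tail.toFinset) := by
  refine mem_permsOn.2 fun x hx => ?_
  rw [Perm.mem_support, Perm.mul_apply, Ne, Perm.inv_eq_iff_eq] at hx
  have hcycle : ¬ σ.SameCycle m x := fun h => hx h.cycleOf_apply.symm
  have hxm : x ≠ m := by
    rintro rfl
    exact hcycle (Perm.SameCycle.refl σ x)
  rw [Perm.cycleOf_apply_of_not_sameCycle hcycle] at hx
  refine mem_sdiff.2 ⟨mem_of_mem_insert_of_ne (mem_permsOn.1 hσ (Perm.mem_support.2 hx)) hxm, ?_⟩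
  rw [List.mem_toFinset, mem_tail_toList]
  exact fun h => hcycle h.2

theorem sum_permsOn_insert {M : Type*} [AddCommMonoid M] (hm : m ∉ S) (φ : Perm α → M) :
    ∑ σ ∈ permsOn (insert m S), φ σ =
      ∑ T ∈ S.powerset, ∑ l ∈ orderings T, ∑ τ ∈ permsOn (S \ T), φ ((m :: l).formPerm * τ) := by
  simp only [sum_sigma']
  refine (sum_bij (fun p _ => (m :: p.2.1).formPerm * p.2.2) ?_ ?_ ?_ fun _ _ => rfl).symm
  · rintro ⟨T, l, τ⟩ h
    simp only [mem_sigma, mem_powerset] at h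
    exact formPerm_mul_mem_permsOn h.1 h.2.1 h.2.2
  · rintro ⟨T, l, τ⟩ h ⟨T', l', τ'⟩ h' e
    simp only [mem_sigma, mem_powerset] at h h' e
    obtain ⟨hT, hl, hτ⟩ := h
    obtain ⟨hT', hl', hτ'⟩ := h'
    have hml := nodup_cons_of_mem_orderings (notMem_mono hT hm) hl
    have hml' := nodup_cons_of_mem_orderings (notMem_mono hT' hm) hl'
    have hcycle : (m :: l).formPerm = (m :: l').formPerm := by
      rw [← cycleOf_formPerm_mul hml (apply_eq_self_of_mem_permsOn_sdiff hm hl hτ), e,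
        cycleOf_formPerm_mul hml' (apply_eq_self_of_mem_permsOn_sdiff hm hl' hτ')]
    obtain rfl : l = l' := by
      rw [← tail_toList_formPerm hml, hcycle, tail_toList_formPerm hml']
    obtain rfl : τ = τ' := mul_left_cancel e
    rw [← toFinset_of_mem_orderings hl, ← toFinset_of_mem_orderings hl']
  · intro σ hσ
    refine ⟨⟨(σ.toList m).tail.toFinset, (σ.toList m).tail, (σ.cycleOf m)⁻¹ * σ⟩, ?_, ?_⟩
    · simp only [mem_sigma, mem_powerset]
      exact ⟨toFinset_tail_toList_subset hσ,
        mem_orderings_toFinset (Perm.nodup_toList σ m).tail, inv_cycleOf_mul_mem_permsOn hσ⟩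
    · simp only [formPerm_cons_tail_toList, mul_inv_cancel_left]

end PermsOn

section CycleWeight

variable {N : ℕ} {R : Type*} [CommSemiring R] {σ τ : Perm (Fin N)} {x m : Fin N}
  {l : List (Fin N)}

open scoped Classical in
/-- The factor contributed by `x` when every up-down cycle of length `k` is weighted by `w k`, and
every other cycle by `0`; the smallest element of a cycle carries the weight of the cycle, the other
ones contribute `1`. -/
noncomputable def cycleWeight (w : ℕ → R) (σ : Perm (Fin N)) (x : Fin N) : R :=
  if IsOrbitMin σ x then if CycleUpDownAt σ x then w (cycLen σ x) else 0 else 1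

theorem cycleWeight_congr (w : ℕ → R) (h : ∀ k, (σ ^ k) x = (τ ^ k) x) :
    cycleWeight w σ x = cycleWeight w τ x := by
  have hlen : cycLen σ x = cycLen τ x :=
    Function.minimalPeriod_eq_minimalPeriod_iff.2 fun k => by
      simp only [Function.IsPeriodicPt, Function.IsFixedPt, Perm.iterate_eq_pow, h]
  have hmin : IsOrbitMin σ x ↔ IsOrbitMin τ x := by simp only [IsOrbitMin, h]
  have hupDown : CycleUpDownAt σ x ↔ CycleUpDownAt τ x := by simp only [CycleUpDownAt, hlen, h]
  classical exact if_congr hmin (if_congr hupDown (congrArg w hlen) rfl) rfl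

theorem cycleWeight_mul_left (w : ℕ → R) (h : Perm.Disjoint σ τ) (hx : τ x = x) :
    cycleWeight w (σ * τ) x = cycleWeight w σ x :=
  cycleWeight_congr w fun k => by
    rw [h.commute.mul_pow, Perm.mul_apply, Perm.pow_apply_eq_self_of_apply_eq_self hx]

theorem cycleWeight_mul_right (w : ℕ → R) (h : Perm.Disjoint σ τ) (hx : σ x = x) :
    cycleWeight w (σ * τ) x = cycleWeight w τ x := by
  rw [h.commute.eq, cycleWeight_mul_left w h.symm hx]

theorem cycLen_formPerm (hl : l.Nodup) (hx : x ∈ l) : cycLen l.formPerm x = l.length := by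
  refine Nat.dvd_right_iff_eq.1 fun k => ?_
  rw [cycLen, ← Function.isPeriodicPt_iff_minimalPeriod_dvd, Function.IsPeriodicPt,
    Function.IsFixedPt, Perm.iterate_eq_pow, ← List.toFinset_card_of_nodup hl]
  exact (isCycleOn_formPerm_toFinset hl).pow_apply_eq (List.mem_toFinset.2 hx)

theorem isOrbitMin_formPerm_iff (hl : (m :: l).Nodup) (hm : ∀ y ∈ l, m < y) (hx : x ∈ m :: l) :
    IsOrbitMin (m :: l).formPerm x ↔ x = m := by
  have hle : ∀ y ∈ m :: l, m ≤ y := List.forall_mem_cons.2 ⟨le_rfl, fun y hy => (hm y hy).le⟩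
  constructor
  · intro h
    obtain ⟨k, -, hk⟩ := (isCycleOn_formPerm_toFinset hl).exists_pow_eq
      (List.mem_toFinset.2 hx) (List.mem_toFinset.2 List.mem_cons_self)
    exact le_antisymm ((h k).trans_eq hk) (hle x hx)
  · rintro rfl k
    rw [formPerm_cons_pow_apply hl]
    exact hle _ (List.getElem_mem _)

theorem cycleUpDownAt_formPerm_iff (hl : (m :: l).Nodup) (hm : ∀ y ∈ l, m < y) :
    CycleUpDownAt (m :: l).formPerm m ↔ IsAlternating false l := by
  rw [← Bool.not_true, ← isAlternating_cons_iff (d := true) hm, isAlternating_iff_getElem,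
    CycleUpDownAt, cycLen_formPerm hl List.mem_cons_self]
  refine forall₂_congr fun i hi => ?_
  simp only [formPerm_cons_pow_apply hl, Nat.mod_eq_of_lt hi,
    Nat.mod_eq_of_lt (Nat.lt_of_succ_lt hi), Precedes]

open scoped Classical in
theorem prod_cycleWeight_formPerm (w : ℕ → R) (hl : (m :: l).Nodup) (hm : ∀ y ∈ l, m < y) :
    ∏ x ∈ (m :: l).toFinset, cycleWeight w (m :: l).formPerm x =
      if IsAlternating false l then w (l.length + 1) else 0 := by
  rw [List.toFinset_cons, prod_insert (by simpa using (List.nodup_cons.1 hl).1),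
    prod_eq_one, mul_one, cycleWeight, if_pos ((isOrbitMin_formPerm_iff hl hm (by simp)).2 rfl),
    cycLen_formPerm hl List.mem_cons_self, List.length_cons]
  · simp only [cycleUpDownAt_formPerm_iff hl hm]
  · intro x hx
    have hx := List.mem_toFinset.1 hx
    rw [cycleWeight, if_neg]
    rw [isOrbitMin_formPerm_iff hl hm (List.mem_cons_of_mem m hx)]
    exact (hm x hx).ne'

theorem prod_cycleWeight_formPerm_mul (w : ℕ → R) {S T : Finset (Fin N)} (hm : m ∉ S) (hT : T ⊆ S)
    (hl : l ∈ orderings T) (hτ : τ ∈ permsOn (S \ T)) :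
    ∏ x ∈ insert m S, cycleWeight w ((m :: l).formPerm * τ) x =
      (∏ x ∈ (m :: l).toFinset, cycleWeight w (m :: l).formPerm x) *
        ∏ x ∈ S \ T, cycleWeight w τ x := by
  have hfix := apply_eq_self_of_mem_permsOn_sdiff hm hl hτ
  have hset : insert m S = (m :: l).toFinset ∪ S \ T := by
    rw [List.toFinset_cons, toFinset_of_mem_orderings hl, insert_union, union_sdiff_of_subset hT]
  have hdisj : Disjoint (m :: l).toFinset (S \ T) := by
    rw [List.toFinset_cons, toFinset_of_mem_orderings hl, disjoint_insert_left]
    exact ⟨fun h => hm (mem_sdiff.1 h).1, disjoint_sdiff⟩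
  rw [hset, prod_union hdisj]
  congr 1 <;> refine prod_congr rfl fun x hx => ?_
  · exact cycleWeight_mul_left w (disjoint_formPerm hfix) (hfix x (List.mem_toFinset.1 hx))
  · have hx : x ∉ m :: l := fun h => disjoint_left.1 hdisj (List.mem_toFinset.2 h) hx
    exact cycleWeight_mul_right w (disjoint_formPerm hfix) (List.formPerm_apply_of_notMem hx)

theorem sum_permsOn_prod_cycleWeight (w : ℕ → R) (S : Finset (Fin N)) :
    ∑ σ ∈ permsOn S, ∏ x ∈ S, cycleWeight w σ x = binomExp (fun k => w (k + 1) * zigzag k) #S := by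
  classical
  refine eq_binomExp_card (ι := Unit)
    (Φ := fun _ S => ∑ σ ∈ permsOn S, ∏ x ∈ S, cycleWeight w σ x)
    (fun _ => true) id (fun _ => ?_) (fun _ m S hS => ?_) () S
  · rw [permsOn_empty, sum_singleton, prod_empty]
  · have hmS := notMem_of_precedes hS
    rw [sum_permsOn_insert hmS]
    refine sum_congr rfl fun T hT => ?_
    have hT := mem_powerset.1 hT
    have hcycle : ∀ l ∈ orderings T,
        ∏ x ∈ (m :: l).toFinset, cycleWeight w (m :: l).formPerm x =
          if IsAlternating false l then w (#T + 1) else 0 := fun l hl => by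
      rw [← length_of_mem_orderings hl]
      exact prod_cycleWeight_formPerm w (nodup_cons_of_mem_orderings (notMem_mono hT hmS) hl)
        fun y hy => hS y (hT ((mem_iff_of_mem_orderings hl).1 hy))
    calc ∑ l ∈ orderings T, ∑ τ ∈ permsOn (S \ T),
          ∏ x ∈ insert m S, cycleWeight w ((m :: l).formPerm * τ) x
        = ∑ l ∈ orderings T, ∑ τ ∈ permsOn (S \ T),
            (if IsAlternating false l then w (#T + 1) else 0) *
              ∏ x ∈ S \ T, cycleWeight w τ x :=
          sum_congr rfl fun l hl => sum_congr rfl fun τ hτ => by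
            rw [prod_cycleWeight_formPerm_mul w hmS hT hl hτ, hcycle l hl]
      _ = (∑ l ∈ alternatingOrderings false T, w (#T + 1)) *
            ∑ τ ∈ permsOn (S \ T), ∏ x ∈ S \ T, cycleWeight w τ x := by
          rw [alternatingOrderings, sum_filter, sum_mul_sum]
      _ = _ := by
          rw [sum_const, card_alternatingOrderings, nsmul_eq_mul, mul_comm (zigzag #T : R)]

open scoped Classical in
theorem prod_cycleWeight_parity (x y : R) (σ : Perm (Fin N)) :
    ∏ z, cycleWeight (fun k => if Even k then x else y) σ z =
      if IsCUD σ then x ^ evenCycleCount σ * y ^ oddCycleCount σ else 0 := by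
  by_cases hσ : IsCUD σ
  · have hweight (z : Fin N) : cycleWeight (fun k => if Even k then x else y) σ z =
        if IsOrbitMin σ z then if Even (cycLen σ z) then x else y else 1 := by
      by_cases hz : IsOrbitMin σ z
      · simp only [cycleWeight, hz, hσ z hz, if_true]
      · simp only [cycleWeight, hz, if_false]
    rw [if_pos hσ, prod_congr rfl fun z _ => hweight z, ← prod_filter, prod_ite, prod_const,
      prod_const, filter_filter, filter_filter]
    simp only [Nat.not_even_iff_odd, evenCycleCount, oddCycleCount, Nat.card_eq_fintype_card,
      Fintype.card_subtype]
  · obtain ⟨z, hz, hupDown⟩ : ∃ z, IsOrbitMin σ z ∧ ¬ CycleUpDownAt σ z := by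
      simpa [IsCUD] using hσ
    rw [if_neg hσ]
    exact prod_eq_zero (mem_univ z) (by simp only [cycleWeight, hz, hupDown, if_true, if_false])

open scoped Classical in
theorem sum_isCUD_pow (n : ℕ) (x y : R) :
    ∑ σ : Perm (Fin n) with IsCUD σ, x ^ evenCycleCount σ * y ^ oddCycleCount σ =
      binomExp (fun k => (if Even (k + 1) then x else y) * zigzag k) n := by
  rw [sum_filter, ← sum_congr rfl fun σ _ => prod_cycleWeight_parity x y σ, ← permsOn_univ,
    sum_permsOn_prod_cycleWeight, card_univ, Fintype.card_fin]

end CycleWeight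

open scoped Classical in
theorem sum_isUpDownPerm_pow_eq_sum_isCUD_pow {R : Type*} [CommSemiring R] (n : ℕ) (x y : R) :
    ∑ π : Perm (Fin (n + 1)) with IsUpDownPerm π, x ^ lrmCount π * y ^ stStat π =
      ∑ σ : Perm (Fin n) with IsCUD σ, x ^ (evenCycleCount σ + 1) * y ^ (oddCycleCount σ + 1) := by
  rw [sum_isUpDownPerm_pow, ← sum_isCUD_pow, mul_sum]
  exact sum_congr rfl fun σ _ => by ring

open Polynomial in
theorem coeff_coeff_sum_C_X_pow_mul_X_pow {ι : Type*} (s : Finset ι) (p q : ι → ℕ) (a b : ℕ) :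
    ((∑ i ∈ s, (C X : ℕ[X][X]) ^ p i * X ^ q i).coeff b).coeff a =
      #{i ∈ s | p i = a ∧ q i = b} := by
  rw [finsetSum_coeff, finsetSum_coeff, card_filter]
  refine sum_congr rfl fun i _ => ?_
  rw [← C_pow, coeff_C_mul_X_pow]
  by_cases hb : q i = b
  · simp [hb, coeff_X_pow, eq_comm]
  · simp [hb, Ne.symm hb]

end UpDownCycle

/-- joint distribution of `(lrm, st)` on up-down permutations of `[n+1]`
vs. `(c_e, c_o)` on CUD permutations of `[n]`. -/
theorem stmt10 (n a b : ℕ) :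
    Nat.card {π : Equiv.Perm (Fin (n + 1)) //
      IsUpDownPerm π ∧ lrmCount π = a + 1 ∧ stStat π = b + 1} =
      Nat.card {σ : Equiv.Perm (Fin n) //
        IsCUD σ ∧ evenCycleCount σ = a ∧ oddCycleCount σ = b} := by
  classical
  have count {m : ℕ} (P : Perm (Fin m) → Prop) (p q : Perm (Fin m) → ℕ) (a b : ℕ) :
      Nat.card {π : Perm (Fin m) // P π ∧ p π = a ∧ q π = b} =
        #{π ∈ ({π | P π} : Finset (Perm (Fin m))) | p π = a ∧ q π = b} := by
    rw [Nat.card_eq_fintype_card, Fintype.card_subtype, filter_filter]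
  have gf := UpDownCycle.sum_isUpDownPerm_pow_eq_sum_isCUD_pow n
    (Polynomial.C Polynomial.X : Polynomial (Polynomial ℕ)) Polynomial.X
  have coeffs := congrArg (fun f => (f.coeff (b + 1)).coeff (a + 1)) gf
  simp only [UpDownCycle.coeff_coeff_sum_C_X_pow_mul_X_pow, Nat.add_right_cancel_iff] at coeffs
  rw [count, count, coeffs]
end
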